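/- arXiv:2111.14477 — 10 statements merged into one kernel-verified Lean document; each statement's English description precedes it below -/
import Mathlib

section
/- For every integer n ≥ 2, the U(n)-weighted Davenport constant satisfies D_{U(n)}(n) = Ω(n) + 1, where U(n) is the group of units of Z_n. -/
open scoped BigOperators

/-- `S` is an `A`-weighted zero-sum sequence in `ZMod n`. -/
def IsWZS {n : ℕ} (A : Set (ZMod n)) {l : ℕ} (S : Fin l → ZMod n) : Prop :=
  ∃ a : Fin l → ZMod n, (∀ i, a i ∈ A) ∧ ∑ i, a i * S i = 0

/-- `S` has a nonempty subsequence which is an `A`-weighted zero-sum sequence. -/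
def HasWZSSub {n : ℕ} (A : Set (ZMod n)) {l : ℕ} (S : Fin l → ZMod n) : Prop :=
  ∃ I : Finset (Fin l), I.Nonempty ∧ ∃ a : Fin l → ZMod n,
    (∀ i ∈ I, a i ∈ A) ∧ ∑ i ∈ I, a i * S i = 0

/-- The `A`-weighted Davenport constant of `ZMod n`: the least positive integer `k`
such that every sequence of `k` elements of `ZMod n` has a nonempty subsequence
which is an `A`-weighted zero-sum sequence. -/
noncomputable def DavW (n : ℕ) (A : Set (ZMod n)) : ℕ :=
  sInf {k | 0 < k ∧ ∀ S : Fin k → ZMod n, HasWZSSub A S}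

/-- An `A`-extremal sequence for the Davenport constant: a sequence of length
`D_A(n) - 1` with no nonempty `A`-weighted zero-sum subsequence. -/
def IsExtremal (n : ℕ) (A : Set (ZMod n)) {l : ℕ} (S : Fin l → ZMod n) : Prop :=
  l = DavW n A - 1 ∧ ¬ HasWZSSub A S

/-- The set of units of `ZMod n`, as a weight set. -/
def USet (n : ℕ) : Set (ZMod n) := {a | IsUnit a}

/-- `S(n)`: the units `a` of `ZMod n` with Jacobi symbol `(a/n) = 1`. -/
def JSet (n : ℕ) : Set (ZMod n) := {a | IsUnit a ∧ jacobiSym (a.val : ℤ) n = 1}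

/-- `L(n;p)`: the units `a` of `ZMod n` with `(a/n) = (a/p)`. -/
def LSet (n p : ℕ) : Set (ZMod n) :=
  {a | IsUnit a ∧ jacobiSym (a.val : ℤ) n = jacobiSym (a.val : ℤ) p}

/-- Two sequences are equivalent with respect to the weight set `A`. -/
def EquivWrt {n : ℕ} (A : Set (ZMod n)) {k : ℕ} (x y : Fin k → ZMod n) : Prop :=
  ∃ (a : Fin k → ZMod n) (c : (ZMod n)ˣ) (σ : Equiv.Perm (Fin k)),
    (∀ i, a i ∈ A) ∧ ∀ i, y (σ i) = (c : ZMod n) * (a i * x i)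

/-- An even number of unit multiples of a common element has a unit-weighted zero sum. -/
lemma dav_pair {ι R : Type*} [DecidableEq ι] [CommRing R] (s : Finset ι) (hs : Even s.card)
    (x : ι → R) (b : R) (h : ∀ i ∈ s, ∃ u : Rˣ, x i = u * b) :
    ∃ a : ι → R, (∀ i, IsUnit (a i)) ∧ ∑ i ∈ s, a i * x i = 0 := by
  obtain ⟨m, hm⟩ := hs
  obtain ⟨t, hts, ht⟩ := Finset.exists_subset_card_eq (s := s) (n := m) (by omega)
  have h2 : ∀ i, ∃ u : Rˣ, i ∈ s → x i = u * b := by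
    intro i
    by_cases hi : i ∈ s
    · obtain ⟨u, hu⟩ := h i hi
      exact ⟨u, fun _ => hu⟩
    · exact ⟨1, fun h => absurd h hi⟩
  choose u hu using h2
  refine ⟨fun i => if i ∈ t then ((u i)⁻¹ : Rˣ) else -((u i)⁻¹ : Rˣ), ?_, ?_⟩
  · intro i
    dsimp only
    split_ifs
    · exact Units.isUnit _
    · exact (Units.isUnit _).neg
  · rw [← Finset.sum_sdiff hts]
    have e1 : ∀ i ∈ s \ t, (if i ∈ t then (((u i)⁻¹ : Rˣ) : R) else -((u i)⁻¹ : Rˣ)) * x i = -b := by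
      intro i hi
      rw [Finset.mem_sdiff] at hi
      rw [if_neg hi.2, hu i hi.1]
      simp
    have e2 : ∀ i ∈ t, (if i ∈ t then (((u i)⁻¹ : Rˣ) : R) else -((u i)⁻¹ : Rˣ)) * x i = b := by
      intro i hi
      rw [if_pos hi, hu i (hts hi)]
      simp
    rw [Finset.sum_congr rfl e1, Finset.sum_congr rfl e2, Finset.sum_const, Finset.sum_const,
      Finset.card_sdiff_of_subset hts, hm, ht]
    simp

/-- Every element of `ZMod (p ^ k)` is a unit times a power of `p`. -/
lemma dav_lev (p k : ℕ) (hp : p.Prime) (y : ZMod (p ^ k)) :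
    ∃ v ≤ k, ∃ u : (ZMod (p ^ k))ˣ, y = u * (p : ZMod (p ^ k)) ^ v := by
  have : NeZero (p ^ k) := ⟨pow_ne_zero _ hp.ne_zero⟩
  have hz : (p : ZMod (p ^ k)) ^ k = 0 := by
    rw [← Nat.cast_pow, ZMod.natCast_self]
  by_cases hy : y = 0
  · exact ⟨k, le_rfl, 1, by rw [hz, hy, mul_zero]⟩
  · have hv : y.val ≠ 0 := by simpa [ZMod.val_eq_zero] using hy
    obtain ⟨e, m, hm, he⟩ := Nat.exists_eq_pow_mul_and_not_dvd hv p hp.one_lt.ne'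
    have hu : IsUnit ((m : ℕ) : ZMod (p ^ k)) := by
      rw [ZMod.isUnit_iff_coprime]
      exact (((Nat.Prime.coprime_iff_not_dvd hp).2 hm).symm).pow_right k
    have hy' : y = (m : ZMod (p ^ k)) * (p : ZMod (p ^ k)) ^ e := by
      rw [← ZMod.natCast_zmod_val y, he]
      push_cast
      ring
    refine ⟨e, ?_, hu.unit, by simpa using hy'⟩
    by_contra hlt
    push Not at hlt
    apply hy
    rw [hy', show e = k + (e - k) by omega, pow_add, hz]
    simp

/-- Prime power case: if every level below `k` occurs an even number of times then
there is a unit-weighted zero sum. -/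
lemma dav_pp {ι : Type*} [DecidableEq ι] (p k : ℕ) (I : Finset ι)
    (x : ι → ZMod (p ^ k)) (lev : ι → ℕ) (hlev : ∀ i, lev i ≤ k)
    (hx : ∀ i, ∃ u : (ZMod (p ^ k))ˣ, x i = u * (p : ZMod (p ^ k)) ^ lev i)
    (hev : ∀ v < k, Even (I.filter (fun i => lev i = v)).card) :
    ∃ a : ι → ZMod (p ^ k), (∀ i, IsUnit (a i)) ∧ ∑ i ∈ I, a i * x i = 0 := by
  have key : ∀ v, ∃ a : ι → ZMod (p ^ k), (∀ i, IsUnit (a i)) ∧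
      (v ≤ k → ∑ i ∈ I with lev i = v, a i * x i = 0) := by
    intro v
    rcases lt_or_ge v k with hv | hv
    · obtain ⟨a, ha, hs⟩ := dav_pair _ (hev v hv) x ((p : ZMod (p ^ k)) ^ v) (by
        intro i hi
        rw [Finset.mem_filter] at hi
        obtain ⟨u, hu⟩ := hx i
        exact ⟨u, by rw [hu, hi.2]⟩)
      exact ⟨a, ha, fun _ => hs⟩
    · refine ⟨fun _ => 1, fun _ => isUnit_one, fun hv' => ?_⟩
      apply Finset.sum_eq_zero
      intro i hi
      rw [Finset.mem_filter] at hi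
      obtain ⟨u, hu⟩ := hx i
      rw [hu, hi.2, le_antisymm hv' hv, ← Nat.cast_pow, ZMod.natCast_self]
      simp
  choose a ha hs using key
  refine ⟨fun i => a (lev i) i, fun i => ha _ i, ?_⟩
  rw [← Finset.sum_fiberwise_of_maps_to (t := Finset.range (k + 1)) (g := lev)
    (fun i _ => Finset.mem_range.2 (Nat.lt_succ_of_le (hlev i)))]
  apply Finset.sum_eq_zero
  intro v hv
  rw [← hs v (Nat.le_of_lt_succ (Finset.mem_range.1 hv))]
  apply Finset.sum_congr rfl
  intro i hi
  simp only [(Finset.mem_filter.1 hi).2]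

lemma dav_two : ∀ z : ZMod 2, z = 0 ∨ z = 1 := by decide

/-- Linear algebra over `ZMod 2`: fewer parity conditions than points. -/
lemma dav_parity {κ : Type*} [Fintype κ] (l : ℕ) (h : Fintype.card κ < l)
    (P : κ → Fin l → Prop) [∀ c i, Decidable (P c i)] :
    ∃ I : Finset (Fin l), I.Nonempty ∧ ∀ c, Even (I.filter (P c)).card := by
  have : Fact (Nat.Prime 2) := ⟨Nat.prime_two⟩
  let M : Matrix κ (Fin l) (ZMod 2) := fun c i => if P c i then 1 else 0
  have hk : LinearMap.ker M.mulVecLin ≠ ⊥ := by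
    apply LinearMap.ker_ne_bot_of_finrank_lt
    simpa using h
  obtain ⟨w, hw, hw0⟩ := (Submodule.ne_bot_iff _).1 hk
  refine ⟨Finset.univ.filter (fun i => w i ≠ 0), ?_, ?_⟩
  · obtain ⟨i, hi⟩ := Function.ne_iff.1 hw0
    exact ⟨i, by simpa using hi⟩
  · intro c
    have h1 : ∑ i, M c i * w i = 0 := congrFun (LinearMap.mem_ker.1 hw) c
    rw [← ZMod.natCast_eq_zero_iff_even, Finset.card_eq_sum_ones, Finset.sum_filter,
      Finset.sum_filter]
    push_cast
    refine Eq.trans ?_ h1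
    apply Finset.sum_congr rfl
    intro i _
    rcases dav_two (w i) with h | h <;> by_cases hP : P c i <;> simp [M, h, hP]

lemma dav_upper (n : ℕ) (hn : n ≠ 0)
    (S : Fin ((Nat.primeFactorsList n).length + 1) → ZMod n) : HasWZSSub (USet n) S := by
  classical
  let φ := ZMod.equivPi n hn
  have hl : ∀ (p : n.primeFactors) (i : Fin ((Nat.primeFactorsList n).length + 1)),
      ∃ v ≤ n.factorization p, ∃ u : (ZMod ((p : ℕ) ^ n.factorization p))ˣ,
        φ (S i) p = u * ((p : ℕ) : ZMod ((p : ℕ) ^ n.factorization p)) ^ v :=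
    fun p i => dav_lev _ _ (Nat.prime_of_mem_primeFactors p.2) _
  choose lev hlev hx using hl
  have hcard : Fintype.card (Σ p : n.primeFactors, Fin (n.factorization p)) <
      (Nat.primeFactorsList n).length + 1 := by
    rw [← ArithmeticFunction.cardFactors_apply,
      ArithmeticFunction.cardFactors_eq_sum_factorization, Fintype.card_sigma]
    simp only [Fintype.card_fin, Finsupp.sum, Nat.support_factorization]
    rw [Finset.sum_coe_sort n.primeFactors (fun p => n.factorization p)]
    omega
  obtain ⟨I, hI, hev⟩ := dav_parity _ hcard (fun c i => lev c.1 i = c.2)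
  have key := fun p : n.primeFactors => dav_pp (p : ℕ) (n.factorization p) I
    (fun i => φ (S i) p) (lev p) (hlev p) (hx p) (fun v hv => hev ⟨p, ⟨v, hv⟩⟩)
  choose a ha hs using key
  refine ⟨I, hI, fun i => φ.symm (fun p => a p i), ?_, ?_⟩
  · intro i _
    show IsUnit _
    exact (Pi.isUnit_iff.2 fun p => ha p i).map φ.symm
  · apply φ.injective
    rw [map_sum, map_zero]
    funext p
    rw [Finset.sum_apply, Pi.zero_apply, ← hs p]
    apply Finset.sum_congr rfl
    intro i _
    rw [map_mul, RingEquiv.apply_symm_apply, Pi.mul_apply]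

lemma dav_lower (n k : ℕ) (hn : n ≠ 0) (hk : k ≤ (Nat.primeFactorsList n).length) :
    ∃ S : Fin k → ZMod n, ¬ HasWZSSub (USet n) S := by
  set L := Nat.primeFactorsList n with hL
  refine ⟨fun i => (((L.take i).prod : ℕ) : ZMod n), ?_⟩
  rintro ⟨I, hI, a, ha, hs⟩
  set j := I.min' hI with hj
  have hjI : j ∈ I := I.min'_mem hI
  have hjL : (j : ℕ) < L.length := lt_of_lt_of_le j.2 hk
  set d := (L.take (j + 1)).prod with hd
  have hdvd : ∀ m, ((j : ℕ) + 1 ≤ m) → d ∣ (L.take m).prod := by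
    intro m hm
    exact ((List.take_prefix_take_left hm).sublist).prod_dvd_prod
  have hdn : d ∣ n := by
    have := hdvd L.length hjL
    rwa [List.take_length, hL, Nat.prod_primeFactorsList hn] at this
  have hs' := congrArg (ZMod.castHom hdn (ZMod d)) hs
  rw [map_sum, map_zero, Finset.sum_eq_single_of_mem j hjI] at hs'
  · rw [map_mul, map_natCast, IsUnit.mul_right_eq_zero ((ha j hjI : IsUnit (a j)).map _),
      ZMod.natCast_eq_zero_iff] at hs'
    have hmem : L[(j : ℕ)] ∈ L := List.getElem_mem _
    have hp : (L[(j : ℕ)]).Prime := Nat.prime_of_mem_primeFactorsList hmem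
    have hpos : 0 < (L.take j).prod := by
      apply Nat.pos_of_ne_zero
      intro h0
      have := List.prod_eq_zero_iff.1 h0
      exact (Nat.prime_of_mem_primeFactorsList (List.mem_of_mem_take this)).ne_zero rfl
    have hle := Nat.le_of_dvd hpos hs'
    rw [hd, List.prod_take_succ L j hjL] at hle
    nlinarith [hp.two_le]
  · intro i hi hij
    have hlt : j < i := lt_of_le_of_ne (I.min'_le i hi) (Ne.symm hij)
    rw [map_mul, map_natCast, (ZMod.natCast_eq_zero_iff _ _).2 (hdvd i hlt), mul_zero]

/-- For every integer `n ≥ 2`, `D_{U(n)}(n) = Ω(n) + 1`. -/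
theorem davenport_units (n : ℕ) (hn : 2 ≤ n) :
    DavW n (USet n) = (Nat.primeFactorsList n).length + 1 := by
  have hn0 : n ≠ 0 := by omega
  apply le_antisymm
  · exact Nat.sInf_le ⟨Nat.succ_pos _, fun S => dav_upper n hn0 S⟩
  · refine le_csInf ⟨_, Nat.succ_pos _, fun S => dav_upper n hn0 S⟩ ?_
    rintro k ⟨_, hk⟩
    by_contra hlt
    obtain ⟨S, hS⟩ := dav_lower n k hn0 (by omega)
    exact hS (hk S)
end

section
/- Let n = m_1·m_2 with m_1, m_2 ≥ 2. Let A, A_1, A_2 be nonempty subsets of Z_n, Z_{m_1}, Z_{m_2} respectively, none of which contains 0, and suppose that for i = 1, 2 the image of A under the natural map f_i : Z_n → Z_{m_i} is contained in A_i. Then D_A(n) ≥ D_{A_1}(m_1) + D_{A_2}(m_2) − 1. -/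
open scoped BigOperators

/-- `DavW` is attained when the weight set is nonempty (via Erdős–Ginzburg–Ziv). -/
theorem davW_mem {n : ℕ} (hn : 2 ≤ n) (A : Set (ZMod n)) (hA : A.Nonempty) :
    0 < DavW n A ∧ ∀ S : Fin (DavW n A) → ZMod n, HasWZSSub A S := by
  have hne : {k | 0 < k ∧ ∀ S : Fin k → ZMod n, HasWZSSub A S}.Nonempty := by
    obtain ⟨a, ha⟩ := hA
    refine ⟨2 * n - 1, by omega, fun S => ?_⟩
    obtain ⟨t, -, hc, hs⟩ := ZMod.erdos_ginzburg_ziv (s := (Finset.univ : Finset (Fin (2 * n - 1))))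
      S (by simp)
    refine ⟨t, Finset.card_pos.1 (by omega), fun _ => a, fun _ _ => ha, ?_⟩
    rw [← Finset.mul_sum, hs, mul_zero]
  exact Nat.sInf_mem hne

/-- Existence of an extremal sequence. -/
theorem exists_extremal (n : ℕ) (A : Set (ZMod n)) :
    ∃ S : Fin (DavW n A - 1) → ZMod n, ¬ HasWZSSub A S := by
  by_contra! h
  rcases Nat.eq_zero_or_pos (DavW n A - 1) with h0 | h0
  · obtain ⟨I, ⟨i, -⟩, -⟩ := h (fun _ => 0)
    have := i.2
    omega
  · have hlt : DavW n A - 1 < DavW n A := by omega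
    exact Nat.notMem_of_lt_sInf (s := {k | 0 < k ∧ ∀ S : Fin k → ZMod n, HasWZSSub A S})
      hlt ⟨h0, h⟩

/-- Cancelling `m₁` modulo `m₁ * m₂`. -/
theorem cast_eq_zero_of_mul {n m₁ m₂ : ℕ} (hm₁ : 2 ≤ m₁) (hm₂ : 2 ≤ m₂) (hn : n = m₁ * m₂)
    (hd : m₂ ∣ n) (x : ZMod n) (hx : (m₁ : ZMod n) * x = 0) :
    ZMod.castHom hd (ZMod m₂) x = 0 := by
  have : NeZero n := ⟨by rw [hn]; positivity⟩
  obtain ⟨y, rfl⟩ := ZMod.natCast_zmod_surjective x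
  rw [map_natCast, ZMod.natCast_eq_zero_iff]
  rw [← Nat.cast_mul, ZMod.natCast_eq_zero_iff, hn] at hx
  exact Nat.dvd_of_mul_dvd_mul_left (by omega) hx

/-- lower bound for the Davenport constant from the two factors. -/
theorem davenport_lower_bound (n m₁ m₂ : ℕ) (hm₁ : 2 ≤ m₁) (hm₂ : 2 ≤ m₂)
    (hn : n = m₁ * m₂)
    (A : Set (ZMod n)) (A₁ : Set (ZMod m₁)) (A₂ : Set (ZMod m₂))
    (hA : A.Nonempty) (hA₁ : A₁.Nonempty) (hA₂ : A₂.Nonempty)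
    (h0 : (0 : ZMod n) ∉ A) (h01 : (0 : ZMod m₁) ∉ A₁) (h02 : (0 : ZMod m₂) ∉ A₂)
    (hf₁ : ∀ a ∈ A, ZMod.castHom (show m₁ ∣ n from ⟨m₂, hn⟩) (ZMod m₁) a ∈ A₁)
    (hf₂ : ∀ a ∈ A,
      ZMod.castHom (show m₂ ∣ n from ⟨m₁, by rw [hn, Nat.mul_comm]⟩) (ZMod m₂) a ∈ A₂) :
    DavW m₁ A₁ + DavW m₂ A₂ - 1 ≤ DavW n A := by
  by_contra! hlt
  have hn2 : 2 ≤ n := by rw [hn]; nlinarith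
  obtain ⟨hpos, hall⟩ := davW_mem hn2 A hA
  obtain ⟨S₁, hS₁⟩ := exists_extremal m₁ A₁
  obtain ⟨S₂, hS₂⟩ := exists_extremal m₂ A₂
  have hd₁ : m₁ ∣ n := ⟨m₂, hn⟩
  have hd₂ : m₂ ∣ n := ⟨m₁, by rw [hn, Nat.mul_comm]⟩
  choose L₁ hL₁ using ZMod.castHom_surjective hd₁
  choose L₂ hL₂ using ZMod.castHom_surjective hd₂
  obtain ⟨e⟩ : Nonempty (Fin (DavW n A) ↪ Fin (DavW m₁ A₁ - 1) ⊕ Fin (DavW m₂ A₂ - 1)) := by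
    apply Function.Embedding.nonempty_of_card_le
    simp only [Fintype.card_fin, Fintype.card_sum]
    omega
  let T : Fin (DavW m₁ A₁ - 1) ⊕ Fin (DavW m₂ A₂ - 1) → ZMod n :=
    Sum.elim (fun i => L₁ (S₁ i)) (fun j => (m₁ : ZMod n) * L₂ (S₂ j))
  obtain ⟨J, hJ, b, hb, hsum⟩ := hall (T ∘ e)
  obtain ⟨I, hI, a, ha, hs⟩ : ∃ I : Finset (Fin (DavW m₁ A₁ - 1) ⊕ Fin (DavW m₂ A₂ - 1)),
      I.Nonempty ∧ ∃ a : _ → ZMod n, (∀ i ∈ I, a i ∈ A) ∧ ∑ i ∈ I, a i * T i = 0 := by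
    refine ⟨J.map e, hJ.map, Function.extend e b 0, ?_, ?_⟩
    · intro i hi
      obtain ⟨j, hj, rfl⟩ := Finset.mem_map.1 hi
      rw [e.injective.extend_apply]
      exact hb j hj
    · rw [Finset.sum_map]
      simpa [e.injective.extend_apply] using hsum
  rw [← Finset.toLeft_disjSum_toRight (u := I), Finset.sum_disjSum] at hs
  simp only [T, Sum.elim_inl, Sum.elim_inr] at hs
  have hleft : I.toLeft = ∅ := by
    by_contra hne
    refine hS₁ ⟨I.toLeft, Finset.nonempty_iff_ne_empty.2 hne,
      fun i => ZMod.castHom hd₁ (ZMod m₁) (a (Sum.inl i)), ?_, ?_⟩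
    · intro i hi
      exact hf₁ _ (ha _ (Finset.mem_toLeft.1 hi))
    · have h := congrArg (ZMod.castHom hd₁ (ZMod m₁)) hs
      simpa only [map_add, map_sum, map_mul, hL₁, map_natCast, ZMod.natCast_self, zero_mul,
        mul_zero, Finset.sum_const_zero, add_zero, map_zero] using h
  have hright : I.toRight.Nonempty := by
    obtain ⟨x, hx⟩ := hI
    rcases x with i | j
    · have := Finset.mem_toLeft.2 hx
      simp [hleft] at this
    · exact ⟨j, Finset.mem_toRight.2 hx⟩
  refine hS₂ ⟨I.toRight, hright, fun i => ZMod.castHom hd₂ (ZMod m₂) (a (Sum.inr i)), ?_, ?_⟩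
  · intro i hi
    exact hf₂ _ (ha _ (Finset.mem_toRight.1 hi))
  · rw [hleft, Finset.sum_empty, zero_add] at hs
    have h := cast_eq_zero_of_mul hm₁ hm₂ hn hd₂ (∑ j ∈ I.toRight, a (Sum.inr j) * L₂ (S₂ j)) (by
      rw [Finset.mul_sum, ← hs]
      exact Finset.sum_congr rfl fun j _ => by ring)
    simpa only [map_sum, map_mul, hL₂] using h
end

section
/- Let n ≥ 3 be odd. If n is a perfect square then S(n) = U(n); otherwise S(n) is a subgroup of index 2 in U(n). -/
lemma jacobi_val_mul {n : ℕ} (m : ℕ) (hm : m ∣ n) (a b : ZMod n) :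
    jacobiSym (((a * b).val : ℕ) : ℤ) m
      = jacobiSym ((a.val : ℕ) : ℤ) m * jacobiSym ((b.val : ℕ) : ℤ) m := by
  rw [ZMod.val_mul, ← jacobiSym.mul_left]
  apply jacobiSym.mod_left'
  push_cast
  rw [Int.emod_emod_of_dvd _ (Int.natCast_dvd_natCast.mpr hm)]

lemma jacobi_val_one {n : ℕ} (m : ℕ) (hm : m ∣ n) :
    jacobiSym (((1 : ZMod n).val : ℕ) : ℤ) m = 1 := by
  rw [ZMod.val_one_eq_one_mod]
  have : jacobiSym (((1 % n : ℕ) : ℤ)) m = jacobiSym 1 m := by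
    apply jacobiSym.mod_left'
    push_cast
    rw [Int.emod_emod_of_dvd _ (Int.natCast_dvd_natCast.mpr hm)]
  rw [this, jacobiSym.one_left]

/-- `S(n)` as a subgroup of `U(n)`: the kernel of `a ↦ (a/n)` (Jacobi symbol). -/
def SGroup (n : ℕ) : Subgroup (ZMod n)ˣ where
  carrier := {a | jacobiSym (((a : ZMod n).val : ℕ) : ℤ) n = 1}
  one_mem' := jacobi_val_one n dvd_rfl
  mul_mem' := by
    intro a b ha hb
    simp only [Set.mem_setOf_eq, Units.val_mul] at *
    rw [jacobi_val_mul n dvd_rfl, ha, hb, mul_one]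
  inv_mem' := by
    intro a ha
    simp only [Set.mem_setOf_eq] at *
    have h1 : jacobiSym ((((a : ZMod n) * ((a⁻¹ : (ZMod n)ˣ) : ZMod n)).val : ℕ) : ℤ) n = 1 := by
      rw [Units.mul_inv]; exact jacobi_val_one n dvd_rfl
    rw [jacobi_val_mul n dvd_rfl, ha, one_mul] at h1
    exact h1

/-- `L(n;p)` as a subgroup of `U(n)`: the units `a` with `(a/n) = (a/p)`. -/
def LGroup (n p : ℕ) (hp : p ∣ n) : Subgroup (ZMod n)ˣ where
  carrier := {a | jacobiSym (((a : ZMod n).val : ℕ) : ℤ) n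
                = jacobiSym (((a : ZMod n).val : ℕ) : ℤ) p}
  one_mem' := by
    simp only [Set.mem_setOf_eq, Units.val_one]
    rw [jacobi_val_one n dvd_rfl, jacobi_val_one p hp]
  mul_mem' := by
    intro a b ha hb
    simp only [Set.mem_setOf_eq, Units.val_mul] at *
    rw [jacobi_val_mul n dvd_rfl, jacobi_val_mul p hp, ha, hb]
  inv_mem' := by
    intro a ha
    simp only [Set.mem_setOf_eq] at *
    have h1 : jacobiSym ((((a : ZMod n) * ((a⁻¹ : (ZMod n)ˣ) : ZMod n)).val : ℕ) : ℤ) n = 1 := by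
      rw [Units.mul_inv]; exact jacobi_val_one n dvd_rfl
    have h2 : jacobiSym ((((a : ZMod n) * ((a⁻¹ : (ZMod n)ˣ) : ZMod n)).val : ℕ) : ℤ) p = 1 := by
      rw [Units.mul_inv]; exact jacobi_val_one p hp
    rw [jacobi_val_mul n dvd_rfl] at h1
    rw [jacobi_val_mul p hp] at h2
    rcases Int.eq_one_or_neg_one_of_mul_eq_one' h1 with ⟨hx, hy⟩ | ⟨hx, hy⟩ <;>
      rcases Int.eq_one_or_neg_one_of_mul_eq_one' h2 with ⟨hx2, hy2⟩ | ⟨hx2, hy2⟩ <;>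
        simp_all

lemma unit_val_gcd {n : ℕ} (u : (ZMod n)ˣ) : Int.gcd (((u : ZMod n).val : ℕ) : ℤ) n = 1 := by
  rw [Int.gcd_natCast_natCast]
  exact ZMod.val_coe_unit_coprime u

lemma exists_jacobi_neg_one {a : ℕ} (ha : Squarefree a) (h1 : a ≠ 1) (hodd : Odd a) :
    ∃ x : ℕ, jacobiSym (x : ℤ) a = -1 := by
  obtain ⟨p, hp, c, rfl⟩ := Nat.exists_prime_and_dvd h1
  haveI := Fact.mk hp
  have hc0 : c ≠ 0 := by rintro rfl; simp at hodd
  have hpc : Nat.Coprime p c := Nat.coprime_of_squarefree_mul ha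
  have hp2 : p ≠ 2 := by
    rintro rfl
    exact (Nat.not_even_iff_odd.mpr hodd) (even_two_mul c)
  obtain ⟨r, hr⟩ := FiniteField.exists_nonsquare (F := ZMod p) (by rwa [ZMod.ringChar_zmod_n])
  obtain ⟨x, hx1, hx2⟩ := Nat.chineseRemainder hpc r.val 1
  refine ⟨x, ?_⟩
  rw [jacobiSym.mul_right' _ hp.ne_zero hc0]
  have e1 : jacobiSym (x : ℤ) p = -1 := by
    apply ZMod.nonsquare_iff_jacobiSym_eq_neg_one.mpr
    have : ((x : ℕ) : ZMod p) = r := by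
      rw [(ZMod.natCast_eq_natCast_iff _ _ _).mpr hx1]; simp
    rw [Int.cast_natCast, this]; exact hr
  have e2 : jacobiSym (x : ℤ) c = 1 := by
    rw [← jacobiSym.one_left c]
    apply jacobiSym.mod_left'
    exact_mod_cast hx2
  rw [e1, e2]; norm_num

/-- if `n` is a square then `S(n) = U(n)`; otherwise `S(n)` has index 2
in `U(n)`. -/
theorem sgroup_top_or_index_two (n : ℕ) (hn : 3 ≤ n) (hodd : Odd n) :
    (IsSquare n → SGroup n = ⊤) ∧ (¬ IsSquare n → (SGroup n).index = 2) := by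
  have hmem : ∀ u : (ZMod n)ˣ, u ∈ SGroup n ↔
      jacobiSym (((u : ZMod n).val : ℕ) : ℤ) n = 1 := fun u => Iff.rfl
  haveI : NeZero n := ⟨by omega⟩
  constructor
  · rintro ⟨m, hm⟩
    rw [Subgroup.eq_top_iff']
    intro u
    rw [hmem]
    have hg := unit_val_gcd u
    generalize (((u : ZMod n).val : ℕ) : ℤ) = z at hg
    have hm0 : m ≠ 0 := by rintro rfl; omega
    have hz : jacobiSym z n = jacobiSym z m * jacobiSym z m := by
      rw [hm, jacobiSym.mul_right' _ hm0 hm0]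
    rcases jacobiSym.eq_one_or_neg_one hg with h | h
    · exact h
    · nlinarith [mul_self_nonneg (jacobiSym z m)]
  · intro hsq
    obtain ⟨a, b, hab, ha⟩ := Nat.sq_mul_squarefree n
    have hb0 : b ≠ 0 := by rintro rfl; simp at hab; omega
    have ha0 : a ≠ 0 := ha.ne_zero
    have ha1 : a ≠ 1 := by
      rintro rfl
      exact hsq ⟨b, by rw [← hab]; ring⟩
    have hdvd : a ∣ n := ⟨b ^ 2, by rw [← hab]; ring⟩
    obtain ⟨x, hx⟩ := exists_jacobi_neg_one ha ha1 (hodd.of_dvd_nat hdvd)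
    have hxa : Nat.Coprime x a := by
      by_contra hcon
      have : jacobiSym (x : ℤ) a = 0 :=
        jacobiSym.eq_zero_iff.mpr ⟨ha0, by rwa [Int.gcd_natCast_natCast]⟩
      omega
    obtain ⟨u, hu⟩ := ZMod.unitsMap_surjective hdvd (ZMod.unitOfCoprime x hxa)
    have hval : ((((u : ZMod n).val : ℕ)) : ZMod a) = (x : ZMod a) := by
      have := congrArg (fun v : (ZMod a)ˣ => (v : ZMod a)) hu
      simpa [ZMod.unitsMap_def] using this
    have hua : jacobiSym (((u : ZMod n).val : ℕ) : ℤ) a = -1 := by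
      rw [← hx]
      apply jacobiSym.mod_left'
      exact_mod_cast (ZMod.natCast_eq_natCast_iff _ _ _).mp hval
    have hun : jacobiSym (((u : ZMod n).val : ℕ) : ℤ) n = -1 := by
      have hg := unit_val_gcd u
      generalize (((u : ZMod n).val : ℕ) : ℤ) = z at hg hua
      have hz : jacobiSym z n = jacobiSym z b ^ 2 * jacobiSym z a := by
        rw [← hab, jacobiSym.mul_right' _ (pow_ne_zero 2 hb0) ha0, jacobiSym.pow_right]
      rcases jacobiSym.eq_one_or_neg_one hg with h | h
      · rw [hua, h] at hz
        nlinarith [sq_nonneg (jacobiSym z b)]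
      · exact h
    rw [Subgroup.index_eq_two_iff]
    refine ⟨u, fun v => ?_⟩
    rw [hmem, hmem, Units.val_mul, jacobi_val_mul n dvd_rfl, hun]
    rcases jacobiSym.eq_one_or_neg_one (unit_val_gcd v) with h | h <;> rw [h] <;> simp
end

section
/- Let n be odd, let d > 1 be a proper divisor of n which is not a perfect square, let n' = n/d, and suppose gcd(d, n') = 1. Let f : Z_n → Z_{n'} be the natural map. Then U(n') ⊆ f(S(n)), i.e., every unit of Z_{n'} is the image under f of some element of S(n). -/
open scoped BigOperators

theorem jac_congr {x y b : ℕ} (h : x ≡ y [MOD b]) :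
    jacobiSym (x : ℤ) b = jacobiSym (y : ℤ) b := by
  apply jacobiSym.mod_left'
  exact_mod_cast h

theorem exists_jac_neg_one (d : ℕ) : Odd d → ¬ IsSquare d →
    ∃ b : ℕ, jacobiSym (b : ℤ) d = -1 := by
  induction d using Nat.recOnPrimeCoprime with
  | zero => intro h; simp at h
  | prime_pow p k hp =>
    intro ho hs
    have : Fact p.Prime := ⟨hp⟩
    have hk : Odd k := by
      by_contra hk
      rw [Nat.not_odd_iff_even] at hk
      exact hs (hk.isSquare_pow p)
    have hp2 : p ≠ 2 := by
      rintro rfl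
      rw [Nat.odd_pow_iff hk.pos.ne'] at ho
      exact absurd ho (by decide)
    obtain ⟨a, ha⟩ := FiniteField.exists_nonsquare (F := ZMod p)
      (by rwa [ZMod.ringChar_zmod_n])
    refine ⟨a.val, ?_⟩
    have h1 : jacobiSym (a.val : ℤ) p = -1 := by
      apply ZMod.nonsquare_iff_jacobiSym_eq_neg_one.mpr
      simpa using ha
    rw [jacobiSym.pow_right, h1, hk.neg_one_pow]
  | coprime a b ha hb hab iha ihb =>
    intro ho hs
    obtain ⟨hoa, hob⟩ := Nat.odd_mul.mp ho
    have key : IsSquare a → ¬ IsSquare b := fun h h' => hs (h.mul h')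
    by_cases hsa : IsSquare a
    · obtain ⟨x, hx⟩ := ihb hob (key hsa)
      obtain ⟨z, hz1, hz2⟩ := Nat.chineseRemainder hab 1 x
      refine ⟨z, ?_⟩
      rw [jacobiSym.mul_right' _ (by omega) (by omega), jac_congr hz1, jac_congr hz2, hx]
      simp
    · obtain ⟨x, hx⟩ := iha hoa hsa
      obtain ⟨z, hz1, hz2⟩ := Nat.chineseRemainder hab x 1
      refine ⟨z, ?_⟩
      rw [jacobiSym.mul_right' _ (by omega) (by omega), jac_congr hz1, jac_congr hz2, hx]
      simp

/-- every unit of `Z_{n'}` lifts to an element of `S(n)`. -/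
theorem units_subset_image_S (n d : ℕ) (hodd : Odd n) (hd : d ∣ n) (hd1 : 1 < d)
    (hdn : d ≠ n) (hsq : ¬ IsSquare d) (hcop : Nat.Coprime d (n / d)) :
    USet (n / d) ⊆ (ZMod.castHom (Nat.div_dvd_of_dvd hd) (ZMod (n / d))) '' JSet n := by
  intro a ha
  have ha : IsUnit a := ha
  have hn : d * (n / d) = n := Nat.mul_div_cancel' hd
  have hod : Odd d := hodd.of_dvd_nat hd
  have hn0 : n ≠ 0 := by rintro rfl; simp at hodd
  have hd0 : d ≠ 0 := by omega
  have hm0 : n / d ≠ 0 := by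
    intro h
    rw [h] at hn
    omega
  have : NeZero n := ⟨hn0⟩
  have : NeZero (n / d) := ⟨hm0⟩
  have hc : Nat.Coprime a.val (n / d) := by
    rw [← ZMod.isUnit_iff_coprime]
    simpa using ha
  obtain ⟨y, hy⟩ : ∃ y : ℕ, jacobiSym (y : ℤ) d = jacobiSym (a.val : ℤ) (n / d) := by
    rcases jacobiSym.eq_one_or_neg_one (a := (a.val : ℤ)) (b := n / d) (by exact_mod_cast hc)
      with h | h
    · exact ⟨1, by rw [h]; simp⟩
    · rw [h]; exact exists_jac_neg_one d hod hsq
  obtain ⟨x, hx1, hx2⟩ := Nat.chineseRemainder hcop y a.val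
  have hJ : jacobiSym (x : ℤ) n = 1 := by
    rw [← hn, jacobiSym.mul_right' _ hd0 hm0, jac_congr hx1, jac_congr hx2, hy, ← sq]
    exact jacobiSym.sq_one (by exact_mod_cast hc)
  refine ⟨(x : ZMod n), ⟨?_, ?_⟩, ?_⟩
  · rw [ZMod.isUnit_iff_coprime]
    by_contra h
    have : jacobiSym (x : ℤ) n = 0 := by
      rw [jacobiSym.eq_zero_iff_not_coprime]
      exact_mod_cast h
    omega
  · rw [← hJ]
    apply jac_congr
    rw [ZMod.val_natCast]
    exact Nat.mod_modEq _ _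
  · rw [map_natCast, (ZMod.natCast_eq_natCast_iff _ _ _).mpr hx2]
    simp
end

section
/- Let S be a sequence in Z_n, let d be a proper divisor of n which divides every term of S, let n' = n/d, and suppose gcd(d, n') = 1. Let f : Z_n → Z_{n'} be the natural map and let S' be the image of S under f. Let A ⊆ Z_n and A' ⊆ Z_{n'} with A' ⊆ f(A). If S' is an A'-weighted zero-sum sequence in Z_{n'}, then S is an A-weighted zero-sum sequence in Z_n. -/
open scoped BigOperators

/-- lifting a weighted zero-sum along division by a coprime divisor. -/
theorem lift_zero_sum (n d : ℕ) (hn : 2 ≤ n) (hd : d ∣ n) (hdn : d ≠ n)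
    (hcop : Nat.Coprime d (n / d))
    {l : ℕ} (S : Fin l → ZMod n)
    (hdiv : ∀ i, (d : ZMod n) ∣ S i)
    (A : Set (ZMod n)) (A' : Set (ZMod (n / d)))
    (hA' : A' ⊆ (ZMod.castHom (Nat.div_dvd_of_dvd hd) (ZMod (n / d))) '' A)
    (h : IsWZS A' fun i => ZMod.castHom (Nat.div_dvd_of_dvd hd) (ZMod (n / d)) (S i)) :
    IsWZS A S := by
  obtain ⟨a', ha', hsum⟩ := h
  choose a haA haf using fun i => hA' (ha' i)
  refine ⟨a, haA, ?_⟩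
  haveI : NeZero n := ⟨by omega⟩
  obtain ⟨y, hy⟩ : (d : ZMod n) ∣ ∑ i, a i * S i :=
    Finset.dvd_sum fun i _ => (hdiv i).mul_left _
  have hf : ZMod.castHom (Nat.div_dvd_of_dvd hd) (ZMod (n / d)) (∑ i, a i * S i) = 0 := by
    rw [map_sum, ← hsum]
    refine Finset.sum_congr rfl fun i _ => ?_
    rw [map_mul, haf]
  rw [hy]
  rw [hy, map_mul, map_natCast] at hf
  have hu : IsUnit ((d : ℕ) : ZMod (n / d)) := (ZMod.isUnit_iff_coprime d (n / d)).2 hcop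
  rw [hu.mul_right_eq_zero] at hf
  obtain ⟨m, rfl⟩ := ZMod.natCast_zmod_surjective y
  rw [map_natCast, ZMod.natCast_eq_zero_iff] at hf
  rw [← Nat.cast_mul, ZMod.natCast_eq_zero_iff]
  calc n = d * (n / d) := (Nat.mul_div_cancel' hd).symm
    _ ∣ d * m := Nat.mul_dvd_mul_left d hf
end

section
/- Let n = p^r where p ≥ 7 is a prime and r ≥ 1, and let A = U(n)² = {x² : x ∈ U(n)}. If S is a sequence in Z_n such that at least three terms of S are units of Z_n, then S is an A-weighted zero-sum sequence. -/
open scoped BigOperators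

lemma sq_card (p : ℕ) [Fact p.Prime] (a : ZMod p) (ha : a ≠ 0) :
    p - 1 ≤ 2 * ((Finset.univ.erase (0 : ZMod p)).image (fun x => a * x ^ 2)).card := by
  have h := Finset.card_le_mul_card_image (f := fun x : ZMod p => a * x ^ 2)
    (Finset.univ.erase (0 : ZMod p)) 2 ?_
  · rw [Finset.card_erase_of_mem (Finset.mem_univ _), Finset.card_univ, ZMod.card] at h
    exact h
  · intro b hb
    obtain ⟨x0, -, rfl⟩ := Finset.mem_image.1 hb
    refine (Finset.card_le_card (t := {x0, -x0}) ?_).trans Finset.card_le_two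
    intro x hx
    have h2 := (Finset.mem_filter.1 hx).2
    have h3 : x ^ 2 = x0 ^ 2 := mul_left_cancel₀ ha h2
    simpa using sq_eq_sq_iff_eq_or_eq_neg.1 h3

open scoped Pointwise in
lemma base_case (p : ℕ) [Fact p.Prime] (hp7 : 7 ≤ p) (a b c d : ZMod p)
    (ha : a ≠ 0) (hb : b ≠ 0) (hc : c ≠ 0) :
    ∃ x y z : ZMod p, x ≠ 0 ∧ y ≠ 0 ∧ z ≠ 0 ∧ a * x ^ 2 + b * y ^ 2 + c * z ^ 2 = d := by
  classical
  have A1 := sq_card p a ha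
  have B1 := sq_card p b hb
  have C1 := sq_card p c hc
  have hodd : p % 2 = 1 := by
    rcases (Fact.out : p.Prime).eq_two_or_odd with h | h
    · omega
    · exact h
  have mem : ∀ e u : ZMod p, u ∈ (Finset.univ.erase (0 : ZMod p)).image (fun x => e * x ^ 2) →
      ∃ x, x ≠ 0 ∧ e * x ^ 2 = u := by
    intro e u hu
    obtain ⟨x, hx, h⟩ := Finset.mem_image.1 hu
    exact ⟨x, (Finset.mem_erase.1 hx).1, h⟩
  have mA := mem a
  have mB := mem b
  have mC := mem c
  generalize (Finset.univ.erase (0 : ZMod p)).image (fun x => a * x ^ 2) = A at *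
  generalize (Finset.univ.erase (0 : ZMod p)).image (fun x => b * x ^ 2) = B at *
  generalize (Finset.univ.erase (0 : ZMod p)).image (fun x => c * x ^ 2) = C at *
  have nA : A.Nonempty := Finset.card_pos.1 (by omega)
  have nB : B.Nonempty := Finset.card_pos.1 (by omega)
  have nC : C.Nonempty := Finset.card_pos.1 (by omega)
  have h1 := ZMod.cauchy_davenport (Fact.out : p.Prime) nA nB
  have h2 := ZMod.cauchy_davenport (Fact.out : p.Prime) (nA.add nB) nC
  have h3 : p ≤ (A + B + C).card := by omega
  have h4 : A + B + C = Finset.univ := by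
    rw [← Finset.card_eq_iff_eq_univ, ZMod.card]
    exact le_antisymm ((Finset.card_le_univ _).trans (ZMod.card p).le) h3
  have hd : d ∈ A + B + C := h4 ▸ Finset.mem_univ d
  obtain ⟨e, he, w, hw, rfl⟩ := Finset.mem_add.1 hd
  obtain ⟨u, hu, v, hv, rfl⟩ := Finset.mem_add.1 he
  obtain ⟨x, hx, rfl⟩ := mA u hu
  obtain ⟨y, hy, rfl⟩ := mB v hv
  obtain ⟨z, hz, rfl⟩ := mC w hw
  exact ⟨x, y, z, hx, hy, hz, rfl⟩

lemma lift_case (p : ℕ) (hp : p.Prime) (hp7 : 7 ≤ p) (a b c d : ℤ)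
    (ha : ¬ (p : ℤ) ∣ a) (hb : ¬ (p : ℤ) ∣ b) (hc : ¬ (p : ℤ) ∣ c) (r : ℕ) :
    ∃ x y z : ℤ, ¬ (p : ℤ) ∣ x ∧ ¬ (p : ℤ) ∣ y ∧ ¬ (p : ℤ) ∣ z ∧
      (p : ℤ) ^ (r + 1) ∣ a * x ^ 2 + b * y ^ 2 + c * z ^ 2 - d := by
  have : Fact p.Prime := ⟨hp⟩
  have key : ∀ t : ℤ, (p : ℤ) ∣ t ↔ (t : ZMod p) = 0 := fun t =>
    (ZMod.intCast_zmod_eq_zero_iff_dvd t p).symm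
  induction r with
  | zero =>
    simp only [zero_add, pow_one, key] at *
    obtain ⟨x, y, z, hx, hy, hz, h⟩ := base_case p hp7 a b c d ha hb hc
    obtain ⟨x, rfl⟩ := ZMod.intCast_surjective x
    obtain ⟨y, rfl⟩ := ZMod.intCast_surjective y
    obtain ⟨z, rfl⟩ := ZMod.intCast_surjective z
    refine ⟨x, y, z, hx, hy, hz, ?_⟩
    push_cast
    rw [h, sub_self]
  | succ r ih =>
    obtain ⟨x, y, z, hx, hy, hz, m, hm⟩ := ih
    have h2 : ¬ (p : ℤ) ∣ 2 := by
      intro h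
      have := Int.le_of_dvd (by norm_num) h
      omega
    have hax : ((2 * a * x : ℤ) : ZMod p) ≠ 0 := by
      rw [key] at *
      push_cast at *
      exact mul_ne_zero (mul_ne_zero h2 ha) hx
    obtain ⟨k, hk⟩ := ZMod.intCast_surjective (-(m : ZMod p) / ((2 * a * x : ℤ) : ZMod p))
    have hdiv : (p : ℤ) ∣ m + 2 * a * x * k := by
      rw [key, Int.cast_add, Int.cast_mul _ k, hk, mul_div_cancel₀ _ hax]
      ring
    obtain ⟨q, hq⟩ := hdiv
    refine ⟨x + k * (p : ℤ) ^ (r + 1), y, z, ?_, hy, hz, q + a * k ^ 2 * (p : ℤ) ^ r, ?_⟩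
    · intro h
      apply hx
      exact (Int.dvd_add_left (Dvd.dvd.mul_left (dvd_pow_self _ (by omega)) k)).1 h
    · have : a * (x + k * (p : ℤ) ^ (r + 1)) ^ 2 + b * y ^ 2 + c * z ^ 2 - d
          = (p : ℤ) ^ (r + 1) * (m + 2 * a * x * k) + a * k ^ 2 * (p : ℤ) ^ (r + 1 + (r + 1)) := by
        rw [mul_add, ← hm]; ring
      rw [this, hq]; ring

/-- a sequence in `Z_{p^r}` (`p ≥ 7` prime) with at least three unit terms
is a `U(n)²`-weighted zero-sum sequence. -/
theorem squares_zero_sum (p r : ℕ) (hp : p.Prime) (hp7 : 7 ≤ p) (hr : 1 ≤ r)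
    {l : ℕ} (S : Fin l → ZMod (p ^ r))
    (h3 : 3 ≤ {i : Fin l | IsUnit (S i)}.ncard) :
    IsWZS {a : ZMod (p ^ r) | ∃ x : ZMod (p ^ r), IsUnit x ∧ a = x ^ 2} S := by
  obtain ⟨i, hi, j, hj, k, hk, hij, hik, hjk⟩ := (Set.two_lt_ncard (Set.toFinite _)).1 h3
  simp only [Set.mem_ofPred_eq] at hi hj hk
  obtain ⟨r, rfl⟩ : ∃ s, r = s + 1 := ⟨r - 1, by omega⟩
  have unit : ∀ t : ℤ, IsUnit (t : ZMod (p ^ (r + 1))) ↔ ¬ (p : ℤ) ∣ t := by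
    intro t
    rw [ZMod.coe_int_isUnit_iff_isCoprime, Nat.cast_pow, IsCoprime.pow_left_iff (by omega),
      (Nat.prime_iff_prime_int.1 hp).coprime_iff_not_dvd]
  obtain ⟨a, ha⟩ := ZMod.intCast_surjective (S i)
  obtain ⟨b, hb⟩ := ZMod.intCast_surjective (S j)
  obtain ⟨c, hc⟩ := ZMod.intCast_surjective (S k)
  obtain ⟨d, hd⟩ := ZMod.intCast_surjective (-∑ t ∈ ((Finset.univ.erase i).erase j).erase k, S t)
  rw [← ha, unit] at hi
  rw [← hb, unit] at hj
  rw [← hc, unit] at hk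
  obtain ⟨x, y, z, hx, hy, hz, h⟩ := lift_case p hp hp7 a b c d hi hj hk r
  rw [← unit] at hx hy hz
  have h' : ((a * x ^ 2 + b * y ^ 2 + c * z ^ 2 - d : ℤ) : ZMod (p ^ (r + 1))) = 0 := by
    rw [ZMod.intCast_zmod_eq_zero_iff_dvd]
    exact_mod_cast h
  push_cast at h'
  rw [ha, hb, hc, hd] at h'
  refine ⟨fun t => if t = i then (x : ZMod (p ^ (r + 1))) ^ 2 else if t = j then (y : ZMod (p ^ (r + 1))) ^ 2
    else if t = k then (z : ZMod (p ^ (r + 1))) ^ 2 else 1, ?_, ?_⟩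
  · intro t
    simp only [Set.mem_ofPred_eq]
    split_ifs
    · exact ⟨_, hx, rfl⟩
    · exact ⟨_, hy, rfl⟩
    · exact ⟨_, hz, rfl⟩
    · exact ⟨1, isUnit_one, by simp⟩
  · rw [← Finset.add_sum_erase _ _ (Finset.mem_univ i),
      ← Finset.add_sum_erase _ _ (show j ∈ Finset.univ.erase i by simp [hij.symm]),
      ← Finset.add_sum_erase _ _ (show k ∈ (Finset.univ.erase i).erase j by
        simp [hik.symm, hjk.symm])]
    rw [Finset.sum_congr rfl (g := S) (by
      intro t ht
      simp only [Finset.mem_erase] at ht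
      simp [ht.1, ht.2.1, ht.2.2.1])]
    simp only [if_true, hij.symm, hik.symm, hjk.symm, if_false]
    linear_combination h'
end

section
/- Let n be odd and squarefree and let A = S(n). Let S = (x_1,…,x_l) be a sequence in Z_n such that for every prime divisor p of n at least two terms of S are coprime to p, and such that at most one term of S is a unit of Z_n. Then S is an A-weighted zero-sum sequence. -/
open scoped BigOperators

lemma aux_jac_cast (n k : ℕ) : jacobiSym (((k : ZMod n)).val : ℤ) n = jacobiSym (k : ℤ) n := by
  rw [ZMod.val_natCast, Int.natCast_mod, ← jacobiSym.mod_left]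

lemma aux_jac_mul (n : ℕ) [NeZero n] (a b : ZMod n) :
    jacobiSym ((a * b).val : ℤ) n = jacobiSym (a.val : ℤ) n * jacobiSym (b.val : ℤ) n := by
  have h : a * b = ((a.val * b.val : ℕ) : ZMod n) := by
    push_cast
    rw [ZMod.natCast_zmod_val, ZMod.natCast_zmod_val]
  rw [h, aux_jac_cast]
  push_cast
  rw [jacobiSym.mul_left]

/-- The field case. -/
lemma aux_field (p : ℕ) [Fact p.Prime] (hp : p ≠ 2) {l : ℕ} (x : Fin l → ZMod p)
    (i j : Fin l) (hij : i ≠ j) (hi : x i ≠ 0) (hj : x j ≠ 0) :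
    ∃ w : Fin l → ZMod p, (∀ k, w k ≠ 0) ∧ ∑ k, w k * x k = 0 := by
  classical
  set t : ZMod p := ∑ k ∈ (Finset.univ.erase i).erase j, x k with ht
  have h3 : 2 < p := lt_of_le_of_ne (Fact.out : p.Prime).two_le (Ne.symm hp)
  obtain ⟨a, ha⟩ : ∃ a : ZMod p, a ∉ ({0, -t / x i} : Finset (ZMod p)) := by
    by_contra! hcon
    have h5 : (Finset.univ : Finset (ZMod p)).card ≤ ({0, -t / x i} : Finset (ZMod p)).card :=
      Finset.card_le_card (fun a _ => hcon a)
    have h6 := Finset.card_le_two (a := (0 : ZMod p)) (b := -t / x i)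
    rw [Finset.card_univ, ZMod.card] at h5
    omega
  simp only [Finset.mem_insert, Finset.mem_singleton, not_or] at ha
  obtain ⟨ha0, ha1⟩ := ha
  have hb : -(t + a * x i) / x j ≠ 0 := by
    intro h
    rw [div_eq_zero_iff] at h
    rcases h with h | h
    · apply ha1
      rw [eq_div_iff hi]
      linear_combination -h
    · exact hj h
  refine ⟨fun k => if k = i then a else if k = j then -(t + a * x i) / x j else 1, ?_, ?_⟩
  · intro k
    dsimp only
    split_ifs
    · exact ha0
    · exact hb
    · exact one_ne_zero
  · rw [← Finset.add_sum_erase _ _ (Finset.mem_univ i),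
      ← Finset.add_sum_erase _ _ (Finset.mem_erase.2 ⟨hij.symm, Finset.mem_univ j⟩)]
    have : ∑ k ∈ (Finset.univ.erase i).erase j,
        (if k = i then a else if k = j then -(t + a * x i) / x j else 1) * x k = t := by
      rw [ht]
      refine Finset.sum_congr rfl fun k hk => ?_
      simp only [Finset.mem_erase] at hk
      rw [if_neg hk.2.1, if_neg hk.1, one_mul]
    rw [this]
    simp only [if_true, if_neg hij.symm]
    rw [div_mul_cancel₀ _ hj]
    ring

lemma aux_units (n : ℕ) (hodd : Odd n) (hsf : Squarefree n)
    {l : ℕ} (S : Fin l → ZMod n)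
    (h2 : ∀ p : ℕ, p.Prime → p ∣ n → 2 ≤ {i : Fin l | Nat.Coprime ((S i).val) p}.ncard) :
    ∃ a : Fin l → ZMod n, (∀ i, IsUnit (a i)) ∧ ∑ i, a i * S i = 0 := by
  have hn0 : n ≠ 0 := by rintro rfl; simp at hodd
  have : NeZero n := ⟨hn0⟩
  have key : ∀ p : ℕ, ∃ w : Fin l → ℕ, p ∈ n.primeFactors →
      (∀ k, ¬ p ∣ w k) ∧ p ∣ ∑ k, w k * (S k).val := by
    intro p
    by_cases hp : p ∈ n.primeFactors
    swap
    · exact ⟨0, fun h => absurd h hp⟩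
    have hpp := Nat.prime_of_mem_primeFactors hp
    have hpn := Nat.dvd_of_mem_primeFactors hp
    have : Fact p.Prime := ⟨hpp⟩
    have hp2 : p ≠ 2 := by
      rintro rfl
      exact (Nat.not_even_iff_odd.2 hodd) (even_iff_two_dvd.2 hpn)
    obtain ⟨i, hi, j, hj, hij⟩ := (Set.one_lt_ncard (Set.toFinite _)).1 (h2 p hpp hpn)
    have hne : ∀ i : Fin l, Nat.Coprime ((S i).val) p → (((S i).val : ℕ) : ZMod p) ≠ 0 := by
      intro i hi h
      rw [ZMod.natCast_eq_zero_iff] at h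
      exact (hpp.coprime_iff_not_dvd.1 hi.symm) h
    obtain ⟨w, hw, hs⟩ := aux_field p hp2 (fun k => (((S k).val : ℕ) : ZMod p)) i j hij
      (hne i hi) (hne j hj)
    refine ⟨fun k => (w k).val, fun _ => ⟨fun k hk => ?_, ?_⟩⟩
    · apply hw k
      rw [← ZMod.natCast_eq_zero_iff, ZMod.natCast_zmod_val] at hk
      exact hk
    · rw [← ZMod.natCast_eq_zero_iff]
      push_cast
      simp only [ZMod.natCast_zmod_val]
      exact hs
  choose w hw using key
  have crt : ∀ k : Fin l, ∃ a : ℕ, ∀ p ∈ n.primeFactors, a ≡ w p k [MOD p] := by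
    intro k
    obtain ⟨a, ha⟩ := Nat.chineseRemainderOfFinset (fun p => w p k) (fun p => p) n.primeFactors
      (fun p hp => (Nat.prime_of_mem_primeFactors hp).ne_zero)
      (fun p hp q hq hpq => (Nat.coprime_primes (Nat.prime_of_mem_primeFactors hp)
        (Nat.prime_of_mem_primeFactors hq)).2 hpq)
    exact ⟨a, ha⟩
  choose a ha using crt
  refine ⟨fun k => (a k : ZMod n), fun k => ?_, ?_⟩
  · rw [ZMod.isUnit_iff_coprime]
    refine Nat.Coprime.symm (Nat.coprime_of_dvd fun p hp hpn hpa => ?_)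
    have hpm : p ∈ n.primeFactors := Nat.mem_primeFactors.2 ⟨hp, hpn, hn0⟩
    exact (hw p hpm).1 k (((ha k p hpm).dvd_iff dvd_rfl).1 hpa)
  · have hd : n ∣ ∑ k, a k * (S k).val := by
      refine (Nat.prod_primeFactors_of_squarefree hsf).symm.dvd.trans ?_
      refine Finset.prod_primes_dvd _ (fun p hp => (Nat.prime_of_mem_primeFactors hp).prime) ?_
      intro p hp
      have h := (hw p hp).2
      rw [← ZMod.natCast_eq_zero_iff] at h ⊢
      rw [← h]
      push_cast
      refine Finset.sum_congr rfl fun k _ => ?_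
      rw [(ZMod.natCast_eq_natCast_iff _ _ _).2 (ha k p hp)]
    rw [← ZMod.natCast_eq_zero_iff] at hd
    push_cast at hd
    simpa only [ZMod.natCast_zmod_val] using hd

/-- A nonunit is fixed by some unit of Jacobi symbol `-1`. -/
lemma aux_flip (n : ℕ) (hodd : Odd n) (hsf : Squarefree n) (x : ZMod n) (hx : ¬ IsUnit x) :
    ∃ c : ZMod n, IsUnit c ∧ jacobiSym (c.val : ℤ) n = -1 ∧ c * x = x := by
  have hn0 : n ≠ 0 := by rintro rfl; simp at hodd
  have : NeZero n := ⟨hn0⟩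
  have hnc : ¬ Nat.Coprime x.val n := by
    rw [← ZMod.isUnit_iff_coprime, ZMod.natCast_zmod_val]; exact hx
  obtain ⟨p, hpp, hpx, hpn⟩ := Nat.Prime.not_coprime_iff_dvd.1 hnc
  have : Fact p.Prime := ⟨hpp⟩
  have hp2 : p ≠ 2 := by
    rintro rfl
    exact (Nat.not_even_iff_odd.2 hodd) (even_iff_two_dvd.2 hpn)
  obtain ⟨m, rfl⟩ := hpn
  have hcop : Nat.Coprime p m := Nat.coprime_of_squarefree_mul hsf
  have : NeZero m := ⟨right_ne_zero_of_mul hn0⟩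
  obtain ⟨g, hg⟩ := FiniteField.exists_nonsquare (F := ZMod p) (by rwa [ZMod.ringChar_zmod_n])
  obtain ⟨c, hc1, hc2⟩ := Nat.chineseRemainder hcop g.val 1
  have hcg : ((c : ℕ) : ZMod p) = g := by
    rw [(ZMod.natCast_eq_natCast_iff _ _ _).2 hc1, ZMod.natCast_zmod_val]
  have hj1 : jacobiSym (c : ℤ) p = -1 := by
    rw [← jacobiSym.legendreSym.to_jacobiSym, legendreSym.eq_neg_one_iff]
    push_cast
    rwa [hcg]
  have hj2 : jacobiSym (c : ℤ) m = 1 := by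
    have h : (c : ℤ) % m = (1 : ℤ) % m := by exact_mod_cast hc2
    rw [jacobiSym.mod_left, h, ← jacobiSym.mod_left, jacobiSym.one_left]
  have hj : jacobiSym (c : ℤ) (p * m) = -1 := by
    rw [jacobiSym.mul_right, hj1, hj2]; norm_num
  refine ⟨(c : ZMod (p * m)), ?_, ?_, ?_⟩
  · rw [ZMod.isUnit_iff_coprime]
    by_contra hcon
    have := (jacobiSym.eq_zero_iff_not_coprime (a := (c : ℤ)) (b := p * m)).2
      (by rwa [Int.gcd_natCast_natCast])
    rw [hj] at this
    norm_num at this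
  · rw [aux_jac_cast, hj]
  · obtain ⟨y, hy⟩ := hpx
    have hmd : (m : ℤ) ∣ (c : ℤ) - 1 := by
      have := (Nat.modEq_iff_dvd.1 hc2.symm)
      simpa using this
    obtain ⟨z, hz⟩ := hmd
    have hxy : x = ((p * y : ℕ) : ZMod (p * m)) := by rw [← hy, ZMod.natCast_zmod_val]
    have hz' : (c : ZMod (p * m)) - 1 = (m : ZMod (p * m)) * (z : ZMod (p * m)) := by
      exact_mod_cast congrArg (Int.cast : ℤ → ZMod (p * m)) hz
    have hpm : (p : ZMod (p * m)) * (m : ZMod (p * m)) = 0 := by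
      exact_mod_cast ZMod.natCast_self (p * m)
    rw [hxy]
    push_cast
    linear_combination (p : ZMod (p * m)) * y * hz' + (z : ZMod (p * m)) * y * hpm

theorem sset_zero_sum (n : ℕ) (hodd : Odd n) (hsf : Squarefree n)
    {l : ℕ} (S : Fin l → ZMod n)
    (h2 : ∀ p : ℕ, p.Prime → p ∣ n → 2 ≤ {i : Fin l | Nat.Coprime ((S i).val) p}.ncard)
    (h1 : {i : Fin l | IsUnit (S i)}.ncard ≤ 1) :
    IsWZS (JSet n) S := by
  have hn0 : n ≠ 0 := by rintro rfl; simp at hodd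
  have : NeZero n := ⟨hn0⟩
  have hone : jacobiSym ((1 : ZMod n).val : ℤ) n = 1 := by
    have := aux_jac_cast n 1
    rw [Nat.cast_one] at this
    rw [this, Nat.cast_one, jacobiSym.one_left]
  obtain ⟨b, hb, hbs⟩ : ∃ b : Fin l → ZMod n, ((∀ i, IsUnit (b i)) ∧
      ∀ i, IsUnit (S i) → b i = 1) ∧ ∑ i, b i * S i = 0 := by
    obtain ⟨a, ha, has⟩ := aux_units n hodd hsf S h2
    by_cases hex : ∃ i, IsUnit (S i)
    · obtain ⟨i, hi⟩ := hex
      obtain ⟨u, hu⟩ := ha i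
      refine ⟨fun k => (↑u⁻¹ : ZMod n) * a k, ⟨fun k => (u⁻¹).isUnit.mul (ha k), ?_⟩, ?_⟩
      · intro k hk
        have : k = i := (Set.ncard_le_one (Set.toFinite _)).1 h1 k hk i hi
        subst this
        dsimp only
        rw [← hu]
        exact u.inv_mul
      · simp only [mul_assoc]
        rw [← Finset.mul_sum, has, mul_zero]
    · push Not at hex
      exact ⟨a, ⟨ha, fun i hi => absurd hi (hex i)⟩, has⟩
  have hfin : ∀ i, ∃ c : ZMod n, c ∈ JSet n ∧ c * S i = b i * S i := by
    intro i
    by_cases hi : IsUnit (S i)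
    · refine ⟨b i, ⟨hb.1 i, ?_⟩, rfl⟩
      rw [hb.2 i hi, hone]
    · have hg : Int.gcd ((b i).val : ℤ) n = 1 := by
        rw [Int.gcd_natCast_natCast]
        have := hb.1 i
        rw [← ZMod.natCast_zmod_val (b i), ZMod.isUnit_iff_coprime] at this
        exact this
      rcases jacobiSym.eq_one_or_neg_one hg with h | h
      · exact ⟨b i, ⟨hb.1 i, h⟩, rfl⟩
      · obtain ⟨c, hc, hcj, hcx⟩ := aux_flip n hodd hsf (S i) hi
        refine ⟨b i * c, ⟨(hb.1 i).mul hc, ?_⟩, ?_⟩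
        · rw [aux_jac_mul, h, hcj]; norm_num
        · rw [mul_assoc, hcx]
  choose c hc hcs using hfin
  exact ⟨c, hc, by rw [← hbs]; exact Finset.sum_congr rfl fun i _ => hcs i⟩
end

section
/- Let n be odd and let A = S(n). If n is prime (i.e., Ω(n) = 1), then D_A(n) = 3. If n is squarefree, every prime divisor of n is at least 7, and Ω(n) ≥ 2, then D_A(n) = Ω(n) + 1. -/
open scoped BigOperators

lemma aux_three_avoid {F : Type*} {a b c r s : F} (hab : a ≠ b) (hac : a ≠ c) (hbc : b ≠ c) :
    (a ≠ r ∧ a ≠ s) ∨ (b ≠ r ∧ b ≠ s) ∨ (c ≠ r ∧ c ≠ s) := by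
  grind

lemma aux_num_ne {p : ℕ} [hp : Fact p.Prime] (h7 : 7 ≤ p) :
    (2 : ZMod p) ≠ 0 ∧ (3 : ZMod p) ≠ 0 ∧ (5 : ZMod p) ≠ 0 := by
  have key : ∀ m : ℕ, 0 < m → m < 7 → ((m : ℕ) : ZMod p) ≠ 0 := by
    intro m h0 hm h
    rw [ZMod.natCast_eq_zero_iff] at h
    have := Nat.le_of_dvd h0 h
    omega
  refine ⟨?_, ?_, ?_⟩
  · exact_mod_cast key 2 (by norm_num) (by norm_num)
  · exact_mod_cast key 3 (by norm_num) (by norm_num)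
  · exact_mod_cast key 5 (by norm_num) (by norm_num)

/-- A point of the conic on an axis gives one off the axes. -/
lemma aux_move {p : ℕ} [hp : Fact p.Prime] (h7 : 7 ≤ p) (A B t a : ZMod p)
    (hA : A ≠ 0) (hB : B ≠ 0) (ht : t ≠ 0) (h : A * a ^ 2 = t) :
    ∃ u v : ZMod p, u ≠ 0 ∧ v ≠ 0 ∧ A * u ^ 2 + B * v ^ 2 = t := by
  obtain ⟨h2, h3, h5⟩ := aux_num_ne h7
  have ha : a ≠ 0 := by
    rintro rfl
    apply ht
    rw [← h]; ring
  have key : ∃ m : ZMod p, m ≠ 0 ∧ A - B * m ^ 2 ≠ 0 ∧ A + B * m ^ 2 ≠ 0 := by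
    have c12 : (1 : ZMod p) ^ 2 ≠ 2 ^ 2 := by
      intro h; apply h3; linear_combination -h
    have c13 : (1 : ZMod p) ^ 2 ≠ 3 ^ 2 := by
      intro h
      have : (2 : ZMod p) ^ 3 = 0 := by linear_combination -h
      exact h2 (pow_eq_zero_iff (by norm_num) |>.1 this)
    have c23 : (2 : ZMod p) ^ 2 ≠ 3 ^ 2 := by
      intro h; apply h5; linear_combination -h
    have conv : ∀ m : ZMod p, m ^ 2 ≠ A / B ∧ m ^ 2 ≠ -(A / B) →
        A - B * m ^ 2 ≠ 0 ∧ A + B * m ^ 2 ≠ 0 := by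
      rintro m ⟨h1, h2⟩
      refine ⟨fun h => h1 ?_, fun h => h2 ?_⟩
      · field_simp; linear_combination -h
      · field_simp; linear_combination h
    rcases aux_three_avoid (r := A / B) (s := -(A / B)) c12 c13 c23 with h | h | h
    · exact ⟨1, one_ne_zero, conv _ h⟩
    · exact ⟨2, h2, conv _ h⟩
    · exact ⟨3, h3, conv _ h⟩
  obtain ⟨m, hm, h1, h4⟩ := key
  refine ⟨a * (A - B * m ^ 2) / (A + B * m ^ 2), a * (2 * A * m) / (A + B * m ^ 2), ?_, ?_, ?_⟩
  · exact div_ne_zero (mul_ne_zero ha h1) h4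
  · exact div_ne_zero (mul_ne_zero ha (mul_ne_zero (mul_ne_zero h2 hA) hm)) h4
  · rw [← h]
    field_simp
    ring

lemma aux_exists_quad {p : ℕ} [hp : Fact p.Prime] (hp2 : p ≠ 2) (A B t : ZMod p)
    (hA : A ≠ 0) (hB : B ≠ 0) : ∃ u v : ZMod p, A * u ^ 2 + B * v ^ 2 = t := by
  obtain ⟨a, b, hab⟩ := FiniteField.exists_root_sum_quadratic
    (f := Polynomial.C A * Polynomial.X ^ 2 + Polynomial.C 0 * Polynomial.X + Polynomial.C 0)
    (g := Polynomial.C B * Polynomial.X ^ 2 + Polynomial.C 0 * Polynomial.X + Polynomial.C (-t))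
    (Polynomial.degree_quadratic hA) (Polynomial.degree_quadratic hB) (by
      rw [ZMod.card]; exact Nat.odd_iff.1 (hp.out.odd_of_ne_two hp2))
  refine ⟨a, b, ?_⟩
  simp at hab
  linear_combination hab

lemma aux_conic {p : ℕ} [hp : Fact p.Prime] (h7 : 7 ≤ p) (A B t : ZMod p)
    (hA : A ≠ 0) (hB : B ≠ 0) (ht : t ≠ 0) :
    ∃ u v : ZMod p, u ≠ 0 ∧ v ≠ 0 ∧ A * u ^ 2 + B * v ^ 2 = t := by
  obtain ⟨a, b, hab⟩ := aux_exists_quad (by omega) A B t hA hB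
  by_cases hb : b = 0
  · exact aux_move h7 A B t a hA hB ht (by rw [← hab, hb]; ring)
  by_cases ha : a = 0
  · obtain ⟨u, v, hu, hv, h⟩ := aux_move h7 B A t b hB hA ht (by rw [← hab, ha]; ring)
    exact ⟨v, u, hv, hu, by rw [← h]; ring⟩
  exact ⟨a, b, ha, hb, hab⟩

lemma aux_conic3 {p : ℕ} [hp : Fact p.Prime] (h7 : 7 ≤ p) (A B C t : ZMod p)
    (hA : A ≠ 0) (hB : B ≠ 0) (hC : C ≠ 0) :
    ∃ u v w : ZMod p, u ≠ 0 ∧ v ≠ 0 ∧ w ≠ 0 ∧ A * u ^ 2 + B * v ^ 2 + C * w ^ 2 = t := by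
  obtain ⟨h2, h3, h5⟩ := aux_num_ne h7
  have : ∃ w : ZMod p, w ≠ 0 ∧ t - C * w ^ 2 ≠ 0 := by
    by_cases h : t - C * 1 ^ 2 = 0
    · refine ⟨2, h2, fun h' => ?_⟩
      have : C * 3 = 0 := by linear_combination h - h'
      exact (mul_ne_zero hC h3) this
    · exact ⟨1, one_ne_zero, h⟩
  obtain ⟨w, hw, ht⟩ := this
  obtain ⟨u, v, hu, hv, h⟩ := aux_conic h7 A B _ hA hB ht
  exact ⟨u, v, w, hu, hv, hw, by rw [h]; ring⟩

lemma aux_units_s7 {p : ℕ} [hp : Fact p.Prime] (hp2 : p ≠ 2) {ι : Type*} [DecidableEq ι]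
    (I : Finset ι) (y : ι → ZMod p) (i0 : ι)
    (h : (I.filter (fun i => y i ≠ 0)).card ≠ 1) :
    ∃ w : ι → ZMod p, (∀ i, w i ≠ 0) ∧ w i0 = 1 ∧ ∑ i ∈ I, w i * y i = 0 := by
  suffices H : ∃ w : ι → ZMod p, (∀ i, w i ≠ 0) ∧ ∑ i ∈ I, w i * y i = 0 by
    obtain ⟨w, hw, hs⟩ := H
    refine ⟨fun i => (w i0)⁻¹ * w i, fun i => mul_ne_zero (inv_ne_zero (hw _)) (hw i),
      inv_mul_cancel₀ (hw _), ?_⟩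
    simp_rw [mul_assoc]
    rw [← Finset.mul_sum, hs, mul_zero]
  by_cases h0 : (I.filter (fun i => y i ≠ 0)).card = 0
  · refine ⟨fun _ => 1, fun _ => one_ne_zero, Finset.sum_eq_zero fun i hi => ?_⟩
    rw [Finset.card_eq_zero, Finset.filter_eq_empty_iff] at h0
    have := h0 hi
    push Not at this
    rw [this, mul_zero]
  obtain ⟨u, hu, v, hv, huv⟩ := Finset.one_lt_card.1 (show 1 < _ by omega :
    1 < (I.filter (fun i => y i ≠ 0)).card)
  simp only [Finset.mem_filter] at hu hv
  set s := ∑ i ∈ (I.erase u).erase v, y i with hs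
  have h2 : (2 : ZMod p) ≠ 0 := by
    intro h
    have h' : ((2 : ℕ) : ZMod p) = 0 := by exact_mod_cast h
    rw [ZMod.natCast_eq_zero_iff] at h'
    exact hp2 ((Nat.prime_dvd_prime_iff_eq hp.out Nat.prime_two).1 h')
  have : ∃ a : ZMod p, a ≠ 0 ∧ s + a * y u ≠ 0 := by
    by_cases h : s + 1 * y u = 0
    · refine ⟨-1, neg_ne_zero.2 one_ne_zero, fun h' => ?_⟩
      have : 2 * y u = 0 := by linear_combination h - h'
      exact (mul_ne_zero h2 hu.2) this
    · exact ⟨1, one_ne_zero, h⟩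
  obtain ⟨a, ha, hsa⟩ := this
  refine ⟨fun i => if i = u then a else if i = v then -(s + a * y u) / y v else 1, ?_, ?_⟩
  · intro i
    dsimp only
    split_ifs
    · exact ha
    · exact div_ne_zero (neg_ne_zero.2 hsa) hv.2
    · exact one_ne_zero
  · rw [← Finset.add_sum_erase I _ hu.1,
      ← Finset.add_sum_erase (I.erase u) _ (Finset.mem_erase.2 ⟨huv.symm, hv.1⟩)]
    rw [Finset.sum_congr rfl (g := y), ← hs]
    · have := hv.2
      simp [huv.symm]
      field_simp
      ring
    · intro i hi
      simp only [Finset.mem_erase] at hi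
      simp [hi.1, hi.2.1]

lemma aux_jac_sq {p : ℕ} [hp : Fact p.Prime] (u : ZMod p) (hu : u ≠ 0) (z : ℤ) :
    jacobiSym (z * (u.val : ℤ) ^ 2) p = jacobiSym z p := by
  rw [jacobiSym.mul_left, jacobiSym.sq_one', mul_one]
  rw [Int.gcd_natCast_natCast, ← Nat.coprime_iff_gcd_eq_one, ← ZMod.isUnit_iff_coprime]
  simpa using hu

lemma aux_exists_sign {p : ℕ} [hp : Fact p.Prime] (hp2 : p ≠ 2) (e : ℤ) (he : e = 1 ∨ e = -1) :
    ∃ z : ℤ, jacobiSym z p = e := by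
  rcases he with rfl | rfl
  · exact ⟨1, jacobiSym.one_left p⟩
  · obtain ⟨a, ha⟩ := FiniteField.exists_nonsquare (F := ZMod p) (by rwa [ZMod.ringChar_zmod_n])
    refine ⟨(a.val : ℤ), ?_⟩
    rw [← jacobiSym.legendreSym.to_jacobiSym, legendreSym.eq_neg_one_iff]
    simpa using ha

lemma aux_ne_of_jac {p : ℕ} [hp : Fact p.Prime] (z : ℤ) (h : jacobiSym z p ≠ 0) :
    (z : ZMod p) ≠ 0 := by
  intro h0
  apply h
  rw [← jacobiSym.legendreSym.to_jacobiSym, legendreSym.eq_zero_iff]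
  exact h0

lemma aux_jac_of_ne {p : ℕ} [hp : Fact p.Prime] (z : ℤ) (h : (z : ZMod p) ≠ 0) :
    jacobiSym z p = 1 ∨ jacobiSym z p = -1 := by
  rw [← jacobiSym.legendreSym.to_jacobiSym]
  exact legendreSym.eq_one_or_neg_one p h

lemma aux_signs {p : ℕ} [hp : Fact p.Prime] (h7 : 7 ≤ p) {ι : Type*} [DecidableEq ι]
    (I : Finset ι) (y : ι → ℤ) (e : ι → ℤ) (he : ∀ i, e i = 1 ∨ e i = -1)
    (h : 2 < (I.filter (fun i => (y i : ZMod p) ≠ 0)).card) :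
    ∃ w : ι → ℤ, (∀ i, jacobiSym (w i) p = e i) ∧ (p : ℤ) ∣ ∑ i ∈ I, w i * y i := by
  choose w0 hw0 using fun i => aux_exists_sign (p := p) (by omega) (e i) (he i)
  have hw0' : ∀ i, (w0 i : ZMod p) ≠ 0 := fun i => aux_ne_of_jac _ (by
    rw [hw0]; rcases he i with h | h <;> rw [h] <;> norm_num)
  obtain ⟨a, ha, b, hb, c, hc, hab, hac, hbc⟩ := Finset.two_lt_card.1 h
  simp only [Finset.mem_filter] at ha hb hc
  obtain ⟨u, v, w, hu, hv, hw, huvw⟩ := aux_conic3 h7 ((w0 a : ZMod p) * y a) ((w0 b : ZMod p) * y b)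
    ((w0 c : ZMod p) * y c) (-(∑ i ∈ ((I.erase a).erase b).erase c, (w0 i : ZMod p) * y i))
    (mul_ne_zero (hw0' _) ha.2) (mul_ne_zero (hw0' _) hb.2) (mul_ne_zero (hw0' _) hc.2)
  let q : ι → ZMod p := fun i => if i = a then u else if i = b then v else if i = c then w else 1
  have hq : ∀ i, q i ≠ 0 := by
    intro i
    simp only [q]
    split_ifs <;> first | assumption | exact one_ne_zero
  refine ⟨fun i => w0 i * ((q i).val : ℤ) ^ 2, fun i => ?_, ?_⟩
  · rw [aux_jac_sq _ (hq i), hw0]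
  · rw [← ZMod.intCast_zmod_eq_zero_iff_dvd]
    push_cast
    simp only [ZMod.natCast_val, ZMod.cast_id', id]
    rw [← Finset.add_sum_erase I _ ha.1,
      ← Finset.add_sum_erase (I.erase a) _ (Finset.mem_erase.2 ⟨hab.symm, hb.1⟩),
      ← Finset.add_sum_erase ((I.erase a).erase b) _
        (Finset.mem_erase.2 ⟨hbc.symm, Finset.mem_erase.2 ⟨hac.symm, hc.1⟩⟩)]
    rw [Finset.sum_congr rfl (g := fun i => (w0 i : ZMod p) * y i)]
    · simp only [q, if_true, hab.symm, hac.symm, hbc.symm, if_false]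
      linear_combination huvw
    · intro i hi
      simp only [Finset.mem_erase] at hi
      simp [q, hi.1, hi.2.1, hi.2.2.1]

lemma aux_jac_prod (a : ℤ) (s : Finset ℕ) (hs : ∀ p ∈ s, p ≠ 0) :
    jacobiSym a (∏ p ∈ s, p) = ∏ p ∈ s, jacobiSym a p := by
  classical
  induction s using Finset.induction_on with
  | empty => simp
  | insert p s hp ih =>
    rw [Finset.prod_insert hp, Finset.prod_insert hp,
      ← ih (fun q hq => hs q (Finset.mem_insert_of_mem hq))]
    have : NeZero p := ⟨hs p (Finset.mem_insert_self _ _)⟩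
    have : NeZero (∏ p ∈ s, p) :=
      ⟨Finset.prod_ne_zero_iff.2 fun q hq => hs q (Finset.mem_insert_of_mem hq)⟩
    exact jacobiSym.mul_right a _ _

lemma aux_crt (n : ℕ) (w : ℕ → ℤ) :
    ∃ z : ℤ, ∀ p ∈ n.primeFactors, (p : ℤ) ∣ z - w p := by
  obtain ⟨k, hk⟩ := Nat.chineseRemainderOfFinset (fun p => (w p % p).toNat) (fun p => p)
    n.primeFactors (fun p hp => (Nat.prime_of_mem_primeFactors hp).ne_zero) (by
      intro p hp q hq hpq
      exact (Nat.coprime_primes (Nat.prime_of_mem_primeFactors hp)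
        (Nat.prime_of_mem_primeFactors hq)).2 hpq)
  refine ⟨k, fun p hp => ?_⟩
  have h := hk p hp
  have hp0 : (p : ℤ) ≠ 0 := by exact_mod_cast (Nat.prime_of_mem_primeFactors hp).ne_zero
  rw [← Int.natCast_modEq_iff, Int.toNat_of_nonneg (Int.emod_nonneg _ hp0)] at h
  have h2 : (k : ℤ) ≡ w p [ZMOD p] := h.trans (Int.mod_modEq _ _)
  exact h2.symm.dvd

lemma aux_mem_JSet {n : ℕ} [NeZero n] (z : ℤ) (h : jacobiSym z n = 1) :
    (z : ZMod n) ∈ JSet n := by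
  constructor
  · rw [ZMod.coe_int_isUnit_iff_isCoprime, isCoprime_comm, Int.isCoprime_iff_gcd_eq_one]
    by_contra hg
    have := (jacobiSym.eq_zero_iff_not_coprime (a := z) (b := n)).2 hg
    omega
  · rw [ZMod.val_intCast, ← jacobiSym.mod_left, h]

lemma aux_assemble {n : ℕ} (hsq : Squarefree n) {l : ℕ} (x : Fin l → ZMod n)
    (I : Finset (Fin l)) (hI : I.Nonempty) (w : ℕ → Fin l → ℤ)
    (h1 : ∀ p ∈ n.primeFactors, (p : ℤ) ∣ ∑ i ∈ I, w p i * ((x i).val : ℤ))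
    (h2 : ∀ i ∈ I, ∏ p ∈ n.primeFactors, jacobiSym (w p i) p = 1) :
    HasWZSSub (JSet n) x := by
  have : NeZero n := ⟨hsq.ne_zero⟩
  choose a ha using fun i => aux_crt n (fun p => w p i)
  refine ⟨I, hI, fun i => (a i : ZMod n), fun i hi => aux_mem_JSet _ ?_, ?_⟩
  · rw [← Nat.prod_primeFactors_of_squarefree hsq, aux_jac_prod, ← h2 i hi]
    · refine Finset.prod_congr rfl fun p hp => jacobiSym.mod_left' ?_
      exact (Int.ModEq.symm ((Int.modEq_iff_dvd).2 (ha i p hp)))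
    · exact fun p hp => (Nat.prime_of_mem_primeFactors hp).ne_zero
  · have : ((∑ i ∈ I, a i * ((x i).val : ℤ) : ℤ) : ZMod n) = 0 := by
      rw [ZMod.intCast_zmod_eq_zero_iff_dvd]
      have hn : (n : ℤ) = ((∏ p ∈ n.primeFactors, p : ℕ) : ℤ) := by
        rw [Nat.prod_primeFactors_of_squarefree hsq]
      rw [hn, Int.natCast_dvd]
      apply Finset.prod_primes_dvd
      · exact fun p hp => (Nat.prime_of_mem_primeFactors hp).prime
      · intro p hp
        rw [← Int.natCast_dvd]
        have := h1 p hp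
        rw [← dvd_sub_left this, ← Finset.sum_sub_distrib]
        refine Finset.dvd_sum fun i hi => ?_
        rw [← sub_mul]
        exact (ha i p hp).mul_right _
    rw [← this]
    push_cast
    simp

lemma aux_comb {ι : Type*} [DecidableEq ι] (R : ι → ℕ → Prop) [∀ i p, Decidable (R i p)]
    (m : ℕ) : ∀ (P : Finset ℕ) (J : Finset ι), P.card = m → m < J.card →
    ∃ I ⊆ J, I.Nonempty ∧ ∀ p ∈ P, (I.filter (fun i => R i p)).card ≠ 1 := by
  induction m with
  | zero =>
    intro P J hP hJ
    refine ⟨J, subset_rfl, Finset.card_pos.1 hJ, ?_⟩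
    rw [Finset.card_eq_zero] at hP
    simp [hP]
  | succ m ih =>
    intro P J hP hJ
    by_cases h : ∀ p ∈ P, (J.filter (fun i => R i p)).card ≠ 1
    · exact ⟨J, subset_rfl, Finset.card_pos.1 (by omega), h⟩
    push Not at h
    obtain ⟨p, hp, h1⟩ := h
    obtain ⟨i, hi⟩ := Finset.card_eq_one.1 h1
    have hiJ : i ∈ J := (Finset.mem_filter.1 (hi ▸ Finset.mem_singleton_self i)).1
    obtain ⟨I, hIJ, hne, hI⟩ := ih (P.erase p) (J.erase i) (by
      rw [Finset.card_erase_of_mem hp]; omega) (by rw [Finset.card_erase_of_mem hiJ]; omega)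
    refine ⟨I, hIJ.trans (Finset.erase_subset _ _), hne, fun q hq => ?_⟩
    by_cases hqp : q = p
    · subst hqp
      have : I.filter (fun j => R j q) = ∅ := by
        rw [Finset.filter_eq_empty_iff]
        intro j hj hR
        have hj' := Finset.mem_erase.1 (hIJ hj)
        have : j ∈ ({i} : Finset ι) := hi ▸ Finset.mem_filter.2 ⟨hj'.2, hR⟩
        exact hj'.1 (Finset.mem_singleton.1 this)
      simp [this]
    · exact hI q (Finset.mem_erase.2 ⟨hqp, hq⟩)

lemma aux_davW {n m : ℕ} (A : Set (ZMod n)) (h1 : ∀ S : Fin (m + 1) → ZMod n, HasWZSSub A S)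
    (S : Fin m → ZMod n) (hS : ¬ HasWZSSub A S) : DavW n A = m + 1 := by
  apply le_antisymm
  · exact Nat.sInf_le ⟨Nat.succ_pos _, h1⟩
  · refine le_csInf ⟨m + 1, Nat.succ_pos _, h1⟩ ?_
    rintro k ⟨-, hk⟩
    by_contra hlt
    have hkm : k ≤ m := by omega
    apply hS
    obtain ⟨I, hI, a, ha, hs⟩ := hk (fun i => S (Fin.castLE hkm i))
    refine ⟨I.map (Fin.castLEEmb hkm), hI.map, 
      fun j => if h : (j : ℕ) < k then a ⟨j, h⟩ else 0, ?_, ?_⟩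
    · intro j hj
      obtain ⟨i, hi, rfl⟩ := Finset.mem_map.1 hj
      simpa using ha i hi
    · rw [Finset.sum_map, ← hs]
      refine Finset.sum_congr rfl fun i hi => ?_
      simp

lemma aux_lower (n : ℕ) (hn : n ≠ 0) (L : List ℕ) (hL : L = n.primeFactorsList) :
    ¬ HasWZSSub (JSet n) (fun i : Fin L.length =>
      (((L.take i).prod : ℕ) : ZMod n)) := by
  rintro ⟨I, hI, a, ha, hs⟩
  set m := I.min' hI
  have hm : m ∈ I := I.min'_mem hI
  set d := (L.take (m + 1)).prod with hd
  have hdn : d ∣ n := by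
    rw [← Nat.prod_primeFactorsList hn, ← hL]
    exact (List.take_sublist _ _).prod_dvd_prod
  have hd2 : d = (L.take m).prod * L[(m : ℕ)] := List.prod_take_succ L m m.2
  have hs2 := congrArg (ZMod.castHom hdn (ZMod d)) hs
  rw [map_sum, map_zero, Finset.sum_eq_single_of_mem m hm] at hs2
  · rw [map_mul, map_natCast, ((ha m hm).1.map _).mul_right_eq_zero,
      ZMod.natCast_eq_zero_iff, hd2] at hs2
    have hpr : (L[(m : ℕ)]).Prime := Nat.prime_of_mem_primeFactorsList (n := n)
      (by rw [← hL]; exact List.getElem_mem _)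
    have hpos : 0 < (L.take m).prod := List.prod_pos fun q hq =>
      (Nat.prime_of_mem_primeFactorsList (hL ▸ (List.take_subset _ _) hq)).pos
    have := Nat.le_of_dvd hpos hs2
    have := hpr.two_le
    nlinarith
  · intro b hb hbm
    rw [map_mul, map_natCast]
    have hlt : m < b := lt_of_le_of_ne (I.min'_le b hb) (Ne.symm hbm)
    have : ((L.take b).prod : ZMod d) = 0 := by
      rw [ZMod.natCast_eq_zero_iff]
      have : L.take (m + 1) = (L.take b).take (m + 1) := by
        rw [List.take_take]; congr 1
        have : (m : ℕ) < b := hlt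
        omega
      rw [hd, this]
      exact (List.take_sublist _ _).prod_dvd_prod
    rw [this, mul_zero]

lemma aux_prod_sign (s : Finset ℕ) (f : ℕ → ℤ) (h : ∀ p ∈ s, f p = 1 ∨ f p = -1) :
    ∏ p ∈ s, f p = 1 ∨ ∏ p ∈ s, f p = -1 := by
  refine Finset.prod_induction f (fun z => z = 1 ∨ z = -1) ?_ (Or.inl rfl) h
  rintro a b (rfl | rfl) (rfl | rfl) <;> simp

lemma aux_weights {n : ℕ} (hodd : Odd n) {l : ℕ} (y : Fin l → ℤ) (I : Finset (Fin l))
    (i0 : Fin l) (hadm : ∀ p ∈ n.primeFactors,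
      (I.filter (fun i => (y i : ZMod p) ≠ 0)).card ≠ 1) :
    ∃ w : ℕ → Fin l → ℤ, ∀ p ∈ n.primeFactors,
      (∀ i, jacobiSym (w p i) p = 1 ∨ jacobiSym (w p i) p = -1) ∧ jacobiSym (w p i0) p = 1 ∧
      (p : ℤ) ∣ ∑ i ∈ I, w p i * y i := by
  have key : ∀ p : ℕ, ∃ w : Fin l → ℤ, p ∈ n.primeFactors →
      (∀ i, jacobiSym (w i) p = 1 ∨ jacobiSym (w i) p = -1) ∧ jacobiSym (w i0) p = 1 ∧
      (p : ℤ) ∣ ∑ i ∈ I, w i * y i := by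
    intro p
    by_cases hp : p ∈ n.primeFactors
    swap
    · exact ⟨fun _ => 0, fun h => absurd h hp⟩
    have : Fact p.Prime := ⟨Nat.prime_of_mem_primeFactors hp⟩
    have hp2 : p ≠ 2 := by
      rintro rfl
      have := Nat.dvd_of_mem_primeFactors hp
      rcases hodd with ⟨k, hk⟩
      omega
    obtain ⟨w, h0, h1, h2⟩ := aux_units_s7 hp2 I (fun i => (y i : ZMod p)) i0 (hadm p hp)
    refine ⟨fun i => ((w i).val : ℤ), fun _ => ⟨fun i => aux_jac_of_ne _ ?_, ?_, ?_⟩⟩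
    · simpa using h0 i
    · beta_reduce
      rw [h1, ZMod.val_one]
      simp
    · rw [← ZMod.intCast_zmod_eq_zero_iff_dvd]
      push_cast
      simpa using h2
  choose w hw using key
  exact ⟨w, hw⟩

lemma aux_L1 {n : ℕ} (hodd : Odd n) (hsq : Squarefree n) {l : ℕ} (x : Fin l → ZMod n)
    (I : Finset (Fin l)) (i0 : Fin l) (hi0 : i0 ∈ I)
    (hadm : ∀ p ∈ n.primeFactors,
      (I.filter (fun i => (((x i).val : ℤ) : ZMod p) ≠ 0)).card ≠ 1)
    (hz : ∀ i ∈ I, i ≠ i0 → ∃ p ∈ n.primeFactors, (((x i).val : ℤ) : ZMod p) = 0) :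
    HasWZSSub (JSet n) x := by
  obtain ⟨w, hw⟩ := aux_weights hodd (fun i => ((x i).val : ℤ)) I i0 hadm
  have hq : ∀ i, ∃ q : ℕ, i ∈ I → i ≠ i0 →
      q ∈ n.primeFactors ∧ (((x i).val : ℤ) : ZMod q) = 0 := by
    intro i
    by_cases h : i ∈ I ∧ i ≠ i0
    · obtain ⟨p, hp⟩ := hz i h.1 h.2
      exact ⟨p, fun _ _ => hp⟩
    · exact ⟨0, fun h1 h2 => absurd ⟨h1, h2⟩ h⟩
  choose q hq using hq
  have hπ : ∀ i, ∏ p ∈ n.primeFactors.erase (q i), jacobiSym (w p i) p = 1 ∨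
      ∏ p ∈ n.primeFactors.erase (q i), jacobiSym (w p i) p = -1 := fun i =>
    aux_prod_sign _ _ fun p hp => (hw p (Finset.mem_of_mem_erase hp)).1 i
  have hr : ∀ i, ∃ r : ℤ, i ∈ I → i ≠ i0 →
      jacobiSym r (q i) = ∏ p ∈ n.primeFactors.erase (q i), jacobiSym (w p i) p := by
    intro i
    by_cases h : i ∈ I ∧ i ≠ i0
    · obtain ⟨hp, -⟩ := hq i h.1 h.2
      have : Fact (q i).Prime := ⟨Nat.prime_of_mem_primeFactors hp⟩
      obtain ⟨r, hr⟩ := aux_exists_sign (p := q i) (by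
        intro h2
        have hd := Nat.dvd_of_mem_primeFactors hp
        rw [h2] at hd
        rcases hodd with ⟨k, hk⟩
        omega) _ (hπ i)
      exact ⟨r, fun _ _ => hr⟩
    · exact ⟨0, fun h1 h2 => absurd ⟨h1, h2⟩ h⟩
  choose r hr using hr
  refine aux_assemble hsq x I ⟨i0, hi0⟩
    (fun p i => if i ≠ i0 ∧ p = q i then r i else w p i) ?_ ?_
  · intro p hp
    have h := (hw p hp).2.2
    rw [← ZMod.intCast_zmod_eq_zero_iff_dvd] at h ⊢
    rw [← h, Int.cast_sum, Int.cast_sum]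
    refine Finset.sum_congr rfl fun i hi => ?_
    split_ifs with hc
    · have := (hq i hi hc.1).2
      rw [← hc.2] at this
      rw [Int.cast_mul, Int.cast_mul, this, mul_zero, mul_zero]
    · rfl
  · intro i hi
    by_cases hii : i = i0
    · subst hii
      refine Finset.prod_eq_one fun p hp => ?_
      simpa using (hw p hp).2.1
    · rw [← Finset.mul_prod_erase _ _ (hq i hi hii).1,
        Finset.prod_congr rfl (g := fun p => jacobiSym (w p i) p)]
      · rw [if_pos ⟨hii, rfl⟩, hr i hi hii]
        rcases hπ i with h | h <;> rw [h] <;> norm_num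
      · intro p hp
        rw [if_neg]
        exact fun h => (Finset.mem_erase.1 hp).1 h.2

lemma aux_L2 {n : ℕ} (hodd : Odd n) (hsq : Squarefree n) {l : ℕ} (x : Fin l → ZMod n)
    (I : Finset (Fin l)) (hI : I.Nonempty)
    (hadm : ∀ p ∈ n.primeFactors,
      (I.filter (fun i => (((x i).val : ℤ) : ZMod p) ≠ 0)).card ≠ 1)
    (q : ℕ) (hq : q ∈ n.primeFactors) (h7 : 7 ≤ q)
    (hc : 2 < (I.filter (fun i => (((x i).val : ℤ) : ZMod q) ≠ 0)).card) :
    HasWZSSub (JSet n) x := by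
  obtain ⟨i0, hi0⟩ := hI
  obtain ⟨w, hw⟩ := aux_weights hodd (fun i => ((x i).val : ℤ)) I i0 hadm
  have hπ : ∀ i, ∏ p ∈ n.primeFactors.erase q, jacobiSym (w p i) p = 1 ∨
      ∏ p ∈ n.primeFactors.erase q, jacobiSym (w p i) p = -1 := fun i =>
    aux_prod_sign _ _ fun p hp => (hw p (Finset.mem_of_mem_erase hp)).1 i
  have : Fact q.Prime := ⟨Nat.prime_of_mem_primeFactors hq⟩
  obtain ⟨r, hr, hrs⟩ := aux_signs h7 I (fun i => ((x i).val : ℤ)) _ hπ hc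
  refine aux_assemble hsq x I ⟨i0, hi0⟩ (fun p i => if p = q then r i else w p i) ?_ ?_
  · intro p hp
    by_cases hpq : p = q
    · subst hpq
      simpa using hrs
    · simpa [hpq] using (hw p hp).2.2
  · intro i hi
    rw [← Finset.mul_prod_erase _ _ hq,
      Finset.prod_congr rfl (g := fun p => jacobiSym (w p i) p)]
    · rw [if_pos rfl, hr i]
      rcases hπ i with h | h <;> rw [h] <;> norm_num
    · intro p hp
      rw [if_neg (Finset.mem_erase.1 hp).1]

lemma aux_upper {n : ℕ} (hodd : Odd n) (hsq : Squarefree n)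
    (h7 : ∀ p : ℕ, p.Prime → p ∣ n → 7 ≤ p) {l : ℕ} (hl : 3 ≤ l)
    (hc : n.primeFactors.card < l) (x : Fin l → ZMod n) : HasWZSSub (JSet n) x := by
  by_cases hadm : ∀ p ∈ n.primeFactors,
      ((Finset.univ : Finset (Fin l)).filter
        (fun i => (((x i).val : ℤ) : ZMod p) ≠ 0)).card ≠ 1
  · by_cases h3 : ∃ p ∈ n.primeFactors, 2 < ((Finset.univ : Finset (Fin l)).filter
        (fun i => (((x i).val : ℤ) : ZMod p) ≠ 0)).card
    · obtain ⟨p, hp, h3⟩ := h3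
      exact aux_L2 hodd hsq x Finset.univ ⟨⟨0, by omega⟩, Finset.mem_univ _⟩ hadm p hp
        (h7 p (Nat.prime_of_mem_primeFactors hp) (Nat.dvd_of_mem_primeFactors hp)) h3
    push Not at h3
    by_cases hf : ∃ i j : Fin l, i ≠ j ∧
        (∀ p ∈ n.primeFactors, (((x i).val : ℤ) : ZMod p) ≠ 0) ∧
        (∀ p ∈ n.primeFactors, (((x j).val : ℤ) : ZMod p) ≠ 0)
    · obtain ⟨i, j, hij, hi, hj⟩ := hf
      obtain ⟨k, hk⟩ : ∃ k : Fin l, k ∉ ({i, j} : Finset (Fin l)) := by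
        by_contra hcon
        push Not at hcon
        have h1 := Finset.card_le_card (show (Finset.univ : Finset (Fin l)) ⊆ {i, j} from
          fun k _ => hcon k)
        have h2 := Finset.card_le_two (a := i) (b := j)
        rw [Finset.card_univ, Fintype.card_fin] at h1
        omega
      simp only [Finset.mem_insert, Finset.mem_singleton, not_or] at hk
      have hk0 : ∀ p ∈ n.primeFactors, (((x k).val : ℤ) : ZMod p) = 0 := by
        intro p hp
        by_contra hne
        have := h3 p hp
        have h4 : 2 < ((Finset.univ : Finset (Fin l)).filter
            (fun i => (((x i).val : ℤ) : ZMod p) ≠ 0)).card :=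
          Finset.two_lt_card.2 ⟨i, by simpa using hi p hp, j, by simpa using hj p hp, k,
            by simpa using hne, hij, Ne.symm hk.1, Ne.symm hk.2⟩
        omega
      refine aux_L1 hodd hsq x {k} k (Finset.mem_singleton_self k) ?_ ?_
      · intro p hp
        rw [Finset.filter_singleton, if_neg (by simpa using hk0 p hp)]
        simp
      · intro i hi hik
        exact absurd (Finset.mem_singleton.1 hi) hik
    · by_cases hg : ∃ i : Fin l, ∀ p ∈ n.primeFactors, (((x i).val : ℤ) : ZMod p) ≠ 0
      · obtain ⟨i, hi⟩ := hg
        refine aux_L1 hodd hsq x Finset.univ i (Finset.mem_univ _) hadm fun j _ hji => ?_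
        by_contra hcon
        push Not at hcon
        exact hf ⟨i, j, Ne.symm hji, hi, hcon⟩
      · push Not at hg
        exact aux_L1 hodd hsq x Finset.univ ⟨0, by omega⟩ (Finset.mem_univ _) hadm
          fun j _ _ => hg j
  · push Not at hadm
    obtain ⟨p, hp, h1⟩ := hadm
    obtain ⟨i, hi⟩ := Finset.card_eq_one.1 h1
    obtain ⟨I, hIJ, hne, hI⟩ := aux_comb (fun (i : Fin l) p => (((x i).val : ℤ) : ZMod p) ≠ 0)
      _ (n.primeFactors.erase p) (Finset.univ.erase i) rfl (by
        rw [Finset.card_erase_of_mem hp, Finset.card_erase_of_mem (Finset.mem_univ _),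
          Finset.card_univ, Fintype.card_fin]
        have := Finset.card_pos.2 ⟨p, hp⟩
        omega)
    have hzero : ∀ j ∈ I, (((x j).val : ℤ) : ZMod p) = 0 := by
      intro j hj
      by_contra hR
      have hj' := Finset.mem_erase.1 (hIJ hj)
      have : j ∈ ({i} : Finset (Fin l)) := hi ▸ Finset.mem_filter.2 ⟨hj'.2, hR⟩
      exact hj'.1 (Finset.mem_singleton.1 this)
    obtain ⟨i0, hi0⟩ := hne
    refine aux_L1 hodd hsq x I i0 hi0 ?_ fun j hj _ => ⟨p, hp, hzero j hj⟩
    intro q hq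
    by_cases hqp : q = p
    · subst hqp
      rw [Finset.filter_eq_empty_iff.2]
      · simp
      · intro j hj
        simpa using hzero j hj
    · exact hI q (Finset.mem_erase.2 ⟨hqp, hq⟩)

lemma aux_sq_mem {p : ℕ} [hp : Fact p.Prime] (u : ZMod p) (hu : u ≠ 0) : u ^ 2 ∈ JSet p := by
  have h := aux_mem_JSet (n := p) (1 * (u.val : ℤ) ^ 2) (by
    rw [aux_jac_sq u hu, jacobiSym.one_left])
  simpa using h

lemma aux_prime {p : ℕ} [hp : Fact p.Prime] (hp2 : p ≠ 2) : DavW p (JSet p) = 3 := by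
  have hone : (1 : ZMod p) ∈ JSet p := by simpa using aux_sq_mem (1 : ZMod p) one_ne_zero
  obtain ⟨g, hg⟩ := FiniteField.exists_nonsquare (F := ZMod p) (by rwa [ZMod.ringChar_zmod_n])
  refine aux_davW (m := 2) _ ?_ ![1, -g] ?_
  · intro S
    by_cases h : ∃ i, S i = 0
    · obtain ⟨i, hi⟩ := h
      exact ⟨{i}, Finset.singleton_nonempty i, fun _ => 1, fun _ _ => hone, by simp [hi]⟩
    push Not at h
    obtain ⟨u, v, huv⟩ := aux_exists_quad hp2 (S 0) (S 1) (-S 2) (h 0) (h 1)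
    let c : Fin 3 → ZMod p := ![u, v, 1]
    refine ⟨Finset.univ.filter (fun i => c i ≠ 0), ⟨2, by simp [c]⟩, fun i => c i ^ 2, ?_, ?_⟩
    · intro i hi
      exact aux_sq_mem _ (Finset.mem_filter.1 hi).2
    · rw [Finset.sum_filter_of_ne]
      · simp [Fin.sum_univ_three, c]
        linear_combination huv
      · intro i _ hne h0
        apply hne
        beta_reduce
        rw [h0]; ring
  · rintro ⟨I, hI, a, ha, hs⟩
    have hsq : ∀ i ∈ I, a i ≠ 0 ∧ IsSquare (a i) := by
      intro i hi
      obtain ⟨h1, h2⟩ := ha i hi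
      refine ⟨h1.ne_zero, ?_⟩
      rw [← jacobiSym.legendreSym.to_jacobiSym, legendreSym.eq_one_iff] at h2
      · simpa using h2
      · simpa using h1.ne_zero
    have hg0 : g ≠ 0 := by
      rintro rfl
      exact hg (IsSquare.zero)
    rw [← Finset.sum_filter_add_sum_filter_not I (fun i => i = 0)] at hs
    have e0 : ∑ i ∈ I.filter (fun i => i = 0), a i * (![1, -g] : Fin 2 → ZMod p) i =
        if 0 ∈ I then a 0 else 0 := by
      rw [Finset.filter_eq']
      split_ifs <;> simp
    have e1 : ∑ i ∈ I.filter (fun i => ¬ i = 0), a i * (![1, -g] : Fin 2 → ZMod p) i =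
        if 1 ∈ I then -(a 1 * g) else 0 := by
      have : I.filter (fun i => ¬ i = 0) = I.filter (fun i => i = 1) := by
        refine Finset.filter_congr fun i _ => ?_
        fin_cases i <;> simp
      rw [this, Finset.filter_eq']
      split_ifs <;> simp
    rw [e0, e1] at hs
    by_cases h0 : (0 : Fin 2) ∈ I <;> by_cases h1 : (1 : Fin 2) ∈ I
    · rw [if_pos h0, if_pos h1] at hs
      apply hg
      obtain ⟨n1, s1⟩ := hsq 1 h1
      have : g = a 0 / a 1 := by
        field_simp
        linear_combination -hs
      rw [this]
      exact (hsq 0 h0).2.div s1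
    · rw [if_pos h0, if_neg h1, add_zero] at hs
      exact (hsq 0 h0).1 hs
    · rw [if_neg h0, if_pos h1, zero_add, neg_eq_zero] at hs
      exact mul_ne_zero (hsq 1 h1).1 hg0 hs
    · obtain ⟨i, hi⟩ := hI
      fin_cases i
      · exact h0 hi
      · exact h1 hi


theorem davenport_S (n : ℕ) (hodd : Odd n) :
    (n.Prime → DavW n (JSet n) = 3) ∧
    (Squarefree n → (∀ p : ℕ, p.Prime → p ∣ n → 7 ≤ p) →
      2 ≤ (Nat.primeFactorsList n).length →
      DavW n (JSet n) = (Nat.primeFactorsList n).length + 1) := by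

  refine ⟨fun hp => ?_, fun hsq h7 h2 => ?_⟩
  · have : Fact n.Prime := ⟨hp⟩
    refine aux_prime ?_
    rintro rfl
    rcases hodd with ⟨k, hk⟩
    omega
  · have hcard : n.primeFactors.card = n.primeFactorsList.length :=
      List.toFinset_card_of_nodup ((Nat.squarefree_iff_nodup_primeFactorsList hsq.ne_zero).1 hsq)
    exact aux_davW _ (fun S => aux_upper hodd hsq h7 (by omega) (by omega) S) _
      (aux_lower n hsq.ne_zero _ rfl)
end

section
/- Let n be odd and squarefree with Ω(n) ≥ 3 and with every prime divisor of n at least 7. Then a sequence S in Z_n is an S(n)-extremal sequence for the Davenport constant if and only if S is a U(n)-extremal sequence for the Davenport constant. -/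
open scoped BigOperators

/-- Local solvability with prescribed quadratic characters. -/
def LocSol {ι : Type*} (p : ℕ) (x : ι → ZMod p) (I : Finset ι) (ε : ι → ℤˣ) : Prop :=
  ∃ a : ι → ZMod p, (∀ i, jacobiSym ((a i).val : ℤ) p = (ε i : ℤ)) ∧ ∑ i ∈ I, a i * x i = 0

lemma jac_eq (p : ℕ) [Fact p.Prime] (a : ZMod p) :
    jacobiSym (a.val : ℤ) p = quadraticChar (ZMod p) a := by
  rw [← jacobiSym.legendreSym.to_jacobiSym, legendreSym]
  simp

lemma exists_sign (p : ℕ) [Fact p.Prime] (hp : 7 ≤ p) (e : ℤˣ) :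
    ∃ g : ZMod p, g ≠ 0 ∧ quadraticChar (ZMod p) g = (e : ℤ) := by
  rcases Int.units_eq_one_or e with rfl | rfl
  · exact ⟨1, one_ne_zero, by simp⟩
  · obtain ⟨a, ha⟩ := quadraticChar_exists_neg_one (F := ZMod p)
      (by rw [ZMod.ringChar_zmod_n]; omega)
    refine ⟨a, ?_, by simpa using ha⟩
    rintro rfl
    simp at ha

lemma small_ne (p : ℕ) [Fact p.Prime] (hp : 7 ≤ p) (m : ℕ) (h0 : 0 < m) (h : m < 7) :
    (m : ZMod p) ≠ 0 := by
  intro hm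
  rw [ZMod.natCast_eq_zero_iff] at hm
  have := Nat.le_of_dvd h0 hm
  omega

lemma loc_congr {ι : Type*} {p : ℕ} [Fact p.Prime] (hp : 7 ≤ p) {x : ι → ZMod p} {I : Finset ι}
    {ε δ : ι → ℤˣ} (h : LocSol p x I ε) (hd : ∀ i ∈ I, x i ≠ 0 → ε i = δ i) :
    LocSol p x I δ := by
  classical
  obtain ⟨a, ha, hs⟩ := h
  choose g hg0 hg using exists_sign p hp
  refine ⟨fun i => if ε i = δ i then a i else g (δ i), ?_, ?_⟩
  · intro i
    by_cases h : ε i = δ i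
    · simp only [h, if_true]; rw [ha, h]
    · simp only [h, if_false]; rw [jac_eq, hg]
  · rw [← hs]
    refine Finset.sum_congr rfl fun i hi => ?_
    by_cases hx : x i = 0
    · simp [hx]
    · simp [hd i hi hx]

lemma loc_scale {ι : Type*} {p : ℕ} [Fact p.Prime] (hp : 7 ≤ p) {x : ι → ZMod p} {I : Finset ι}
    {ε : ι → ℤˣ} (h : LocSol p x I ε) (k : ℤˣ) :
    LocSol p x I (fun i => k * ε i) := by
  obtain ⟨a, ha, hs⟩ := h
  obtain ⟨g, hg0, hg⟩ := exists_sign p hp k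
  refine ⟨fun i => g * a i, ?_, ?_⟩
  · intro i
    have := ha i
    rw [jac_eq] at this ⊢
    rw [map_mul, hg, this]; push_cast; rfl
  · simp only [mul_assoc]
    rw [← Finset.mul_sum, hs, mul_zero]

/-- two squares with the sum having prescribed character -/
lemma two_sq (p : ℕ) [Fact p.Prime] (hp : 7 ≤ p) (e : ℤˣ) :
    ∃ s t : ZMod p, s ≠ 0 ∧ t ≠ 0 ∧ quadraticChar (ZMod p) (s ^ 2 + t ^ 2) = (e : ℤ) := by
  have h3 := small_ne p hp 3 (by norm_num) (by norm_num)
  have h4 := small_ne p hp 4 (by norm_num) (by norm_num)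
  have h5 := small_ne p hp 5 (by norm_num) (by norm_num)
  rcases Int.units_eq_one_or e with rfl | rfl
  · refine ⟨(3 : ℕ), (4 : ℕ), h3, h4, ?_⟩
    have : (((3 : ℕ) : ZMod p) ^ 2 + ((4 : ℕ) : ZMod p) ^ 2) = ((5 : ℕ) : ZMod p) ^ 2 := by
      push_cast; norm_num
    rw [this, quadraticChar_sq_one' h5]; rfl
  · obtain ⟨g, hg0, hg⟩ := exists_sign p hp (-1)
    obtain ⟨s, t, hst⟩ := ZMod.sq_add_sq p g
    have hns : ¬ IsSquare g := by
      rw [← quadraticChar_neg_one_iff_not_isSquare, hg]; rfl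
    refine ⟨s, t, ?_, ?_, by rw [hst, hg]⟩
    · rintro rfl; exact hns ⟨t, by rw [← hst]; ring⟩
    · rintro rfl; exact hns ⟨s, by rw [← hst]; ring⟩

lemma exists_sq_factor (p : ℕ) [Fact p.Prime] {A B : ZMod p} (hA : A ≠ 0) (hB : B ≠ 0)
    (h : quadraticChar (ZMod p) A = quadraticChar (ZMod p) B) :
    ∃ k : ZMod p, k ≠ 0 ∧ B = A * k ^ 2 := by
  have h1 : quadraticChar (ZMod p) (A * B) = 1 := by
    rw [map_mul, ← h, ← sq, quadraticChar_sq_one hA]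
  rw [quadraticChar_one_iff_isSquare (mul_ne_zero hA hB)] at h1
  obtain ⟨r, hr⟩ := h1
  have hr0 : r ≠ 0 := by
    rintro rfl
    exact mul_ne_zero hA hB (by simpa using hr)
  refine ⟨r / A, div_ne_zero hr0 hA, ?_⟩
  field_simp
  rw [mul_comm, hr]; ring

lemma core_eq (p : ℕ) [Fact p.Prime] (hp : 7 ≤ p) {A B C : ZMod p} (hA : A ≠ 0) (hB : B ≠ 0)
    (hC : C ≠ 0) (h : quadraticChar (ZMod p) A = quadraticChar (ZMod p) B) :
    ∃ s t u : ZMod p, s ≠ 0 ∧ t ≠ 0 ∧ u ≠ 0 ∧ s ^ 2 * A + t ^ 2 * B + u ^ 2 * C = 0 := by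
  obtain ⟨k, hk0, hk⟩ := exists_sq_factor p hA hB h
  obtain ⟨e, he⟩ : ∃ e : ℤˣ, quadraticChar (ZMod p) (- C * A) = (e : ℤ) := by
    rcases quadraticChar_dichotomy (F := ZMod p) (a := - C * A) (mul_ne_zero (neg_ne_zero.2 hC) hA)
      with h | h
    · exact ⟨1, h⟩
    · exact ⟨-1, h⟩
  obtain ⟨s, t, hs, ht, hst⟩ := two_sq p hp e
  have hne : s ^ 2 + t ^ 2 ≠ 0 := by
    intro h0
    rw [h0] at hst
    simp at hst
    exact e.ne_zero hst.symm
  obtain ⟨w, hw0, hw⟩ := exists_sq_factor p (mul_ne_zero (neg_ne_zero.2 hC) hA) hne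
    (by rw [he, hst])
  refine ⟨s, t / k, A * w, hs, div_ne_zero ht hk0, mul_ne_zero hA hw0, ?_⟩
  rw [hk]
  field_simp
  linear_combination A * hw

lemma core (p : ℕ) [Fact p.Prime] (hp : 7 ≤ p) {A B C : ZMod p} (hA : A ≠ 0) (hB : B ≠ 0)
    (hC : C ≠ 0) :
    ∃ s t u : ZMod p, s ≠ 0 ∧ t ≠ 0 ∧ u ≠ 0 ∧ s ^ 2 * A + t ^ 2 * B + u ^ 2 * C = 0 := by
  by_cases h1 : quadraticChar (ZMod p) A = quadraticChar (ZMod p) B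
  · exact core_eq p hp hA hB hC h1
  by_cases h2 : quadraticChar (ZMod p) A = quadraticChar (ZMod p) C
  · obtain ⟨s, t, u, hs, ht, hu, h⟩ := core_eq p hp hA hC hB h2
    exact ⟨s, u, t, hs, hu, ht, by rw [← h]; ring⟩
  by_cases h3 : quadraticChar (ZMod p) B = quadraticChar (ZMod p) C
  · obtain ⟨s, t, u, hs, ht, hu, h⟩ := core_eq p hp hB hC hA h3
    exact ⟨u, s, t, hu, hs, ht, by rw [← h]; ring⟩
  exfalso
  rcases quadraticChar_dichotomy hA with a | a <;> rcases quadraticChar_dichotomy hB with b | b <;>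
    rcases quadraticChar_dichotomy hC with c | c <;> rw [a] at h1 h2 <;> rw [b] at h1 h3 <;>
    rw [c] at h2 h3 <;> tauto

lemma ne_zero_sum {ι : Type*} {p : ℕ} [Fact p.Prime] (hp : 7 ≤ p) (y : ι → ZMod p) (J : Finset ι)
    {i : ι} (hi : i ∈ J) (hy : y i ≠ 0) :
    ∃ s : ι → ZMod p, (∀ i, s i ≠ 0) ∧ ∑ i ∈ J, s i ^ 2 * y i ≠ 0 := by
  classical
  have h3 : (3 : ZMod p) ≠ 0 := by
    have := small_ne p hp 3 (by norm_num) (by norm_num); exact_mod_cast this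
  have h2 : (2 : ZMod p) ≠ 0 := by
    have := small_ne p hp 2 (by norm_num) (by norm_num); exact_mod_cast this
  by_cases h : ∑ j ∈ J, y j = 0
  · refine ⟨fun j => if j = i then 2 else 1, fun j => ?_, ?_⟩
    · dsimp only; split_ifs
      · exact h2
      · exact one_ne_zero
    · have : ∑ j ∈ J, (if j = i then (2 : ZMod p) else 1) ^ 2 * y j
          = ∑ j ∈ J, y j + ∑ j ∈ J, (if j = i then 3 * y j else 0) := by
        rw [← Finset.sum_add_distrib]
        refine Finset.sum_congr rfl fun j _ => ?_
        split_ifs <;> ring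
      rw [this, h, zero_add, Finset.sum_ite_eq' , if_pos hi]
      exact mul_ne_zero h3 hy
  · exact ⟨fun _ => 1, fun _ => one_ne_zero, by simpa using h⟩

lemma sq_sum_zero {ι : Type*} [DecidableEq ι] {p : ℕ} [Fact p.Prime] (hp : 7 ≤ p) (y : ι → ZMod p)
    (I : Finset ι) (hc : 3 ≤ (I.filter (fun i => y i ≠ 0)).card) :
    ∃ s : ι → ZMod p, (∀ i, s i ≠ 0) ∧ ∑ i ∈ I, s i ^ 2 * y i = 0 := by
  obtain ⟨i, j, k, hi, hj, hk, hij, hik, hjk⟩ := Finset.two_lt_card_iff.1 hc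
  simp only [Finset.mem_filter] at hi hj hk
  have hjI : j ∈ I.erase i := Finset.mem_erase.2 ⟨hij.symm, hj.1⟩
  obtain ⟨r, hr, hrs⟩ := ne_zero_sum hp y ((I.erase i).erase j) (i := k)
    (by simp [hik.symm, hjk.symm, hk.1]) hk.2
  obtain ⟨s, t, u, hs, ht, hu, h⟩ := core p hp hi.2 hj.2 hrs
  refine ⟨fun m => if m = i then s else if m = j then t else u * r m, fun m => ?_, ?_⟩
  · dsimp only; split_ifs
    · exact hs
    · exact ht
    · exact mul_ne_zero hu (hr m)
  · rw [← Finset.add_sum_erase _ _ hi.1, ← Finset.add_sum_erase _ _ hjI, ← h, Finset.mul_sum,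
      ← add_assoc]
    congr 1
    · simp [hij.symm]
    · refine Finset.sum_congr rfl fun m hm => ?_
      simp only [Finset.mem_erase] at hm
      simp only [hm.1, hm.2.1, if_false]
      ring

lemma loc_full {ι : Type*} [DecidableEq ι] {p : ℕ} [Fact p.Prime] (hp : 7 ≤ p) (x : ι → ZMod p)
    (I : Finset ι) (hc : 3 ≤ (I.filter (fun i => x i ≠ 0)).card) (ε : ι → ℤˣ) :
    LocSol p x I ε := by
  choose g hg0 hg using exists_sign p hp
  obtain ⟨s, hs, h⟩ := sq_sum_zero hp (fun i => g (ε i) * x i) I (by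
    refine hc.trans (Finset.card_le_card fun i hi => ?_)
    rw [Finset.mem_filter] at hi ⊢
    exact ⟨hi.1, mul_ne_zero (hg0 _) hi.2⟩)
  refine ⟨fun i => s i ^ 2 * g (ε i), fun i => ?_, by simpa only [mul_assoc] using h⟩
  rw [jac_eq, map_mul, quadraticChar_sq_one' (hs i), one_mul, hg]

lemma zero_iff {n : ℕ} (hsf : Squarefree n) (z : ZMod n) :
    z = 0 ↔ ∀ p ∈ n.primeFactors, (z.cast : ZMod p) = 0 := by
  have : NeZero n := ⟨hsf.ne_zero⟩
  constructor
  · rintro rfl p _; simp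
  · intro h
    rw [← ZMod.natCast_zmod_val z, ZMod.natCast_eq_zero_iff]
    have hd := Nat.prod_primeFactors_of_squarefree hsf
    refine Eq.subst (motive := fun m => m ∣ z.val) hd ?_
    apply Finset.prod_primes_dvd
    · intro p hp; exact (Nat.prime_of_mem_primeFactors hp).prime
    · intro p hp
      have := h p hp
      rwa [ZMod.cast_eq_val, ZMod.natCast_eq_zero_iff] at this

lemma cast_sum' {n p : ℕ} (h : p ∣ n) {ι : Type*} (I : Finset ι) (a x : ι → ZMod n) :
    ((∑ i ∈ I, a i * x i : ZMod n).cast : ZMod p)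
      = ∑ i ∈ I, ((a i).cast : ZMod p) * ((x i).cast : ZMod p) := by
  have := map_sum (ZMod.castHom h (ZMod p)) (fun i => a i * x i) I
  simp only [map_mul] at this
  exact this

lemma jac_prod {n : ℕ} (hsf : Squarefree n) (m : ℤ) :
    jacobiSym m n = ∏ p ∈ n.primeFactors, jacobiSym m p := by
  have h := jacobiSym.list_prod_right (a := m) (l := n.primeFactorsList)
    (fun q hq => (Nat.prime_of_mem_primeFactorsList hq).ne_zero)
  rw [Nat.prod_primeFactorsList hsf.ne_zero] at h
  rw [h, ← Nat.toFinset_factors, List.prod_toFinset]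
  exact (Nat.squarefree_iff_nodup_primeFactorsList hsf.ne_zero).1 hsf

lemma jac_cast {n p : ℕ} [NeZero n] (a : ZMod n) :
    jacobiSym (a.val : ℤ) p = jacobiSym (((a.cast : ZMod p).val : ℕ) : ℤ) p := by
  rw [ZMod.cast_eq_val, ZMod.val_natCast, jacobiSym.mod_left]
  push_cast; rfl

lemma crt {n : ℕ} (c : ∀ p : ℕ, ZMod p) :
    ∃ a : ZMod n, ∀ p ∈ n.primeFactors, (a.cast : ZMod p) = c p := by
  obtain ⟨k, hk⟩ := Nat.chineseRemainderOfFinset (fun p => (c p).val) (fun p => p) n.primeFactors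
    (fun p hp => (Nat.prime_of_mem_primeFactors hp).ne_zero)
    (fun p hp q hq hpq => (Nat.coprime_primes (Nat.prime_of_mem_primeFactors hp)
      (Nat.prime_of_mem_primeFactors hq)).2 hpq)
  refine ⟨k, fun p hp => ?_⟩
  have : NeZero p := ⟨(Nat.prime_of_mem_primeFactors hp).ne_zero⟩
  rw [ZMod.cast_natCast (Nat.dvd_of_mem_primeFactors hp)]
  have := (ZMod.natCast_eq_natCast_iff _ _ _).2 (hk p hp)
  rw [this, ZMod.natCast_zmod_val]

lemma mem_JSet {n : ℕ} [NeZero n] {a : ZMod n} (h : jacobiSym (a.val : ℤ) n = 1) : a ∈ JSet n := by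
  refine ⟨?_, h⟩
  have h1 : ¬ ((a.val : ℤ).gcd n ≠ 1) := by
    rw [← jacobiSym.eq_zero_iff_not_coprime, h]; norm_num
  push Not at h1
  rw [← ZMod.natCast_zmod_val a, ZMod.isUnit_iff_coprime]
  rwa [Int.gcd_natCast_natCast] at h1

/-- local to global -/
lemma glob {n : ℕ} (hsf : Squarefree n) {l : ℕ} (S : Fin l → ZMod n) (I : Finset (Fin l))
    (hI : I.Nonempty) (ε : ℕ → Fin l → ℤˣ)
    (hs : ∀ p ∈ n.primeFactors, LocSol p (fun i => (S i).cast) I (ε p))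
    (hprod : ∀ i, ∏ p ∈ n.primeFactors, ε p i = 1) : HasWZSSub (JSet n) S := by
  have : NeZero n := ⟨hsf.ne_zero⟩
  choose! b hb hbs using hs
  choose a ha using fun i => crt (n := n) (fun p => b p i)
  refine ⟨I, hI, a, fun i _ => mem_JSet ?_, ?_⟩
  · rw [jac_prod hsf]
    have h1 : ∀ p ∈ n.primeFactors, jacobiSym ((a i).val : ℤ) p = ((ε p i : ℤˣ) : ℤ) := by
      intro p hp
      rw [jac_cast, ha i p hp, hb p hp i]
    rw [Finset.prod_congr rfl h1, ← Units.coe_prod, hprod]; rfl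
  · rw [zero_iff hsf]
    intro p hp
    rw [cast_sum' (Nat.dvd_of_mem_primeFactors hp), ← hbs p hp]
    exact Finset.sum_congr rfl fun i _ => by rw [ha i p hp]

/-- adjusting at one prime -/
lemma glob' {n : ℕ} (hsf : Squarefree n) {l : ℕ} (S : Fin l → ZMod n) (I : Finset (Fin l))
    (hI : I.Nonempty) (ε : ℕ → Fin l → ℤˣ) (q : ℕ) (hq : q ∈ n.primeFactors)
    (hs : ∀ p ∈ n.primeFactors, p ≠ q → LocSol p (fun i => (S i).cast) I (ε p))
    (hsq : LocSol q (fun i => (S i).cast) I (fun i => ∏ p ∈ n.primeFactors.erase q, ε p i)) :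
    HasWZSSub (JSet n) S := by
  refine glob hsf S I hI
    (fun p => if p = q then (fun i => ∏ p ∈ n.primeFactors.erase q, ε p i) else ε p) ?_ ?_
  · intro p hp
    by_cases h : p = q
    · subst h; simpa using hsq
    · simpa [h] using hs p hp h
  · intro i
    rw [← Finset.mul_prod_erase _ _ hq]
    have : ∏ p ∈ n.primeFactors.erase q, (if p = q then
        (fun i => ∏ p ∈ n.primeFactors.erase q, ε p i) else ε p) i
        = ∏ p ∈ n.primeFactors.erase q, ε p i := by
      refine Finset.prod_congr rfl fun p hp => ?_
      simp [(Finset.mem_erase.1 hp).1]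
    rw [this]
    simp [Int.units_mul_self]

lemma U_to_J {n : ℕ} (hsf : Squarefree n) (hp7 : ∀ p : ℕ, p.Prime → p ∣ n → 7 ≤ p)
    {l : ℕ} (hl : 3 ≤ l) (S : Fin l → ZMod n) (hU : HasWZSSub (USet n) S) :
    HasWZSSub (JSet n) S := by
  have : NeZero n := ⟨hsf.ne_zero⟩
  obtain ⟨I, hI, a₀, ha₀, hsum₀⟩ := hU
  -- make the weights units everywhere
  obtain ⟨a, ha, hsum⟩ : ∃ a : Fin l → ZMod n, (∀ i, IsUnit (a i)) ∧ ∑ i ∈ I, a i * S i = 0 := by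
    classical
    refine ⟨fun i => if i ∈ I then a₀ i else 1, fun i => ?_, ?_⟩
    · dsimp only; split_ifs with h
      · exact ha₀ i h
      · exact isUnit_one
    · rw [← hsum₀]
      exact Finset.sum_congr rfl fun i hi => by simp [hi]
  have hpr : ∀ p ∈ n.primeFactors, Fact p.Prime := fun p hp => ⟨Nat.prime_of_mem_primeFactors hp⟩
  have h7 : ∀ p ∈ n.primeFactors, 7 ≤ p := fun p hp =>
    hp7 p (Nat.prime_of_mem_primeFactors hp) (Nat.dvd_of_mem_primeFactors hp)
  have hau : ∀ p ∈ n.primeFactors, ∀ i, ((a i).cast : ZMod p) ≠ 0 := by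
    intro p hp i
    have := hpr p hp
    have := (ha i).map (ZMod.castHom (Nat.dvd_of_mem_primeFactors hp) (ZMod p))
    simpa using this.ne_zero
  have hsp : ∀ p ∈ n.primeFactors,
      ∑ i ∈ I, ((a i).cast : ZMod p) * ((S i).cast : ZMod p) = 0 := by
    intro p hp
    rw [← cast_sum' (Nat.dvd_of_mem_primeFactors hp), hsum, ZMod.cast_zero]
  have hloc : ∀ p ∈ n.primeFactors, ∃ ε, LocSol p (fun i => ((S i).cast : ZMod p)) I ε := by
    intro p hp
    have := hpr p hp
    have : ∀ i, ∃ e : ℤˣ, jacobiSym (((a i).cast : ZMod p).val : ℤ) p = (e : ℤ) := by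
      intro i
      rw [jac_eq]
      rcases quadraticChar_dichotomy (hau p hp i) with h | h
      · exact ⟨1, h⟩
      · exact ⟨-1, h⟩
    choose e he using this
    exact ⟨e, fun i => (a i).cast, he, hsp p hp⟩
  choose! ε hε using hloc
  set J : ℕ → Finset (Fin l) := fun p => I.filter (fun i => ((S i).cast : ZMod p) ≠ 0) with hJ
  have hJ1 : ∀ p ∈ n.primeFactors, (J p).card ≠ 1 := by
    intro p hp h1
    have := hpr p hp
    obtain ⟨i, hi⟩ := Finset.card_eq_one.1 h1
    have hiJ : i ∈ J p := by rw [hi]; simp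
    have hiJ' := Finset.mem_filter.1 hiJ
    have := hsp p hp
    rw [Finset.sum_eq_single_of_mem i hiJ'.1] at this
    · exact mul_ne_zero (hau p hp i) hiJ'.2 this
    · intro j hj hji
      by_contra hne
      have : j ∈ J p := Finset.mem_filter.2 ⟨hj, right_ne_zero_of_mul hne⟩
      rw [hi, Finset.mem_singleton] at this
      exact hji this
  by_cases hall : ∀ p ∈ n.primeFactors, (J p).card = 2
  swap
  · push Not at hall
    obtain ⟨q, hq, hq2⟩ := hall
    have := hpr q hq
    refine glob' hsf S I hI ε q hq (fun p hp _ => hε p hp) ?_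
    by_cases h0 : (J q).card = 0
    · refine loc_congr (h7 q hq) (hε q hq) fun i hi hx => ?_
      have : i ∈ J q := Finset.mem_filter.2 ⟨hi, hx⟩
      rw [Finset.card_eq_zero.1 h0] at this
      simp at this
    · refine loc_full (h7 q hq) _ _ ?_ _
      have := hJ1 q hq
      change 3 ≤ (J q).card
      omega
  by_cases hsame : ∃ q ∈ n.primeFactors, ∃ r ∈ n.primeFactors, ∃ v ∈ J q, v ∉ J r
  · obtain ⟨q, hq, r, hr, v, hv, hvr⟩ := hsame
    have := hpr q hq
    have := hpr r hr
    have hqr : r ≠ q := by rintro rfl; exact hvr hv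
    obtain ⟨w, hw⟩ : ∃ w, w ≠ v ∧ J q = {v, w} := by
      obtain ⟨s, t, hst, h⟩ := Finset.card_eq_two.1 (hall q hq)
      rw [h] at hv
      simp only [Finset.mem_insert, Finset.mem_singleton] at hv
      rcases hv with rfl | rfl
      · exact ⟨t, hst.symm, h⟩
      · exact ⟨s, hst, by rw [h, Finset.pair_comm]⟩
    have hvI : v ∈ I := (Finset.mem_filter.1 hv).1
    have hvr0 : ((S v).cast : ZMod r) = 0 := by
      by_contra h
      exact hvr (Finset.mem_filter.2 ⟨hvI, h⟩)
    set π : Fin l → ℤˣ := fun i => ∏ p ∈ n.primeFactors.erase q, ε p i with hπ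
    -- local criterion at q
    have key : ∀ δ : Fin l → ℤˣ, δ v * ε q v = δ w * ε q w →
        LocSol q (fun i => ((S i).cast : ZMod q)) I δ := by
      intro δ hδ
      refine loc_congr (h7 q hq) (loc_scale (h7 q hq) (hε q hq) (δ v * ε q v)) fun i hi hx => ?_
      have : i ∈ J q := Finset.mem_filter.2 ⟨hi, hx⟩
      rw [hw.2] at this
      simp only [Finset.mem_insert, Finset.mem_singleton] at this
      rcases this with rfl | rfl
      · rw [mul_assoc, Int.units_mul_self, mul_one]
      · rw [hδ, mul_assoc, Int.units_mul_self, mul_one]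
    by_cases hc : π v * ε q v = π w * ε q w
    · exact glob' hsf S I hI ε q hq (fun p hp _ => hε p hp) (key _ hc)
    · let c : ℕ → Fin l → ℤˣ := fun p i => if p = r ∧ i = v then -1 else 1
      refine glob' hsf S I hI (fun p i => c p i * ε p i) q hq ?_ (key _ ?_)
      · intro p hp _
        have := hpr p hp
        refine loc_congr (h7 p hp) (hε p hp) fun i hi hx => ?_
        by_cases h : p = r ∧ i = v
        · obtain ⟨rfl, rfl⟩ := h
          exact absurd hvr0 hx
        · simp [c, h]
      · have hcv : ∏ p ∈ n.primeFactors.erase q, c p v = -1 := by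
          rw [Finset.prod_eq_single_of_mem r (Finset.mem_erase.2 ⟨hqr, hr⟩)]
          · simp [c]
          · intro p _ hpr'
            simp [c, hpr']
        have hcw : ∏ p ∈ n.primeFactors.erase q, c p w = 1 := by
          refine Finset.prod_eq_one fun p _ => ?_
          simp [c, hw.1]
        simp only [Finset.prod_mul_distrib, hcv, hcw]
        change -1 * π v * ε q v = 1 * π w * ε q w
        rcases Int.units_eq_one_or (π v * ε q v) with h1 | h1 <;>
        rcases Int.units_eq_one_or (π w * ε q w) with h2 | h2 <;>
        rw [h1, h2] at hc <;> rw [mul_assoc, mul_assoc, h1, h2] <;> simp at hc ⊢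
  · push Not at hsame
    by_cases hzero : ∃ t, S t = 0
    · obtain ⟨t, ht⟩ := hzero
      refine ⟨{t}, by simp, fun _ => 1, fun _ _ => ⟨isUnit_one, ?_⟩, by simp [ht]⟩
      rcases Nat.lt_or_ge 1 n with h | h
      · have : Fact (1 < n) := ⟨h⟩
        rw [ZMod.val_one]; simp
      · have : n = 1 := by have := NeZero.pos n; omega
        subst this; simp
    push Not at hzero
    obtain ⟨i₀, hi₀⟩ := hI
    -- some prime exists
    obtain ⟨q₀, hq₀⟩ : ∃ q, q ∈ n.primeFactors := by
      by_contra h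
      push Not at h
      exact hzero i₀ ((zero_iff hsf _).2 fun p hp => absurd hp (h p))
    obtain ⟨t, ht⟩ : ∃ t, t ∉ J q₀ := by
      by_contra h
      push Not at h
      have : J q₀ = Finset.univ := Finset.eq_univ_iff_forall.2 h
      have h2 := hall q₀ hq₀
      rw [this, Finset.card_univ, Fintype.card_fin] at h2
      omega
    have hJeq : ∀ p ∈ n.primeFactors, J p = J q₀ := fun p hp => Finset.Subset.antisymm
      (fun v hv => hsame p hp q₀ hq₀ v hv) (fun v hv => hsame q₀ hq₀ p hp v hv)
    obtain ⟨q, hq, hqt⟩ : ∃ q ∈ n.primeFactors, ((S t).cast : ZMod q) ≠ 0 := by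
      by_contra h
      push Not at h
      exact hzero t ((zero_iff hsf _).2 h)
    have hfilt : ∀ p ∈ n.primeFactors, ((S t).cast : ZMod p) ≠ 0 →
        3 ≤ ((insert t (J q₀)).filter (fun i => ((S i).cast : ZMod p) ≠ 0)).card := by
      intro p hp hpt
      rw [Finset.filter_true_of_mem, Finset.card_insert_of_notMem ht, hall q₀ hq₀]
      intro i hi
      rcases Finset.mem_insert.1 hi with rfl | hi
      · exact hpt
      · rw [← hJeq p hp] at hi
        exact (Finset.mem_filter.1 hi).2
    have := hpr q hq
    refine glob' hsf S (insert t (J q₀)) (Finset.insert_nonempty _ _) ε q hq ?_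
      (loc_full (h7 q hq) _ _ (hfilt q hq hqt) _)
    intro p hp _
    have := hpr p hp
    by_cases hpt : ((S t).cast : ZMod p) = 0
    · obtain ⟨b, hb, hbs⟩ := hε p hp
      refine ⟨b, hb, ?_⟩
      beta_reduce at hbs ⊢
      rw [Finset.sum_insert ht, hpt, mul_zero, zero_add, ← hbs, ← hJeq p hp]
      refine Finset.sum_subset (Finset.filter_subset _ _) fun i hi hni => ?_
      have : ((S i).cast : ZMod p) = 0 := by
        by_contra h
        exact hni (Finset.mem_filter.2 ⟨hi, h⟩)
      rw [this, mul_zero]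
    · exact loc_full (h7 p hp) _ _ (hfilt p hp hpt) _

lemma exists_free {n : ℕ} (hsf : Squarefree n) {l : ℕ} (hl : l ≤ (Nat.primeFactorsList n).length) :
    ∃ S : Fin l → ZMod n, ¬ HasWZSSub (USet n) S := by
  have hnd := (Nat.squarefree_iff_nodup_primeFactorsList hsf.ne_zero).1 hsf
  let q : Fin l → ℕ := fun i => (Nat.primeFactorsList n)[i.1]'(by omega)
  have hqm : ∀ i, q i ∈ n.primeFactorsList := fun i => List.getElem_mem _
  have hqinj : Function.Injective q := by
    intro i j h
    exact Fin.ext ((List.Nodup.getElem_inj_iff hnd).1 h)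
  refine ⟨fun i => ((n / q i : ℕ) : ZMod n), ?_⟩
  rintro ⟨I, ⟨i, hi⟩, a, ha, hs⟩
  have hpi := Nat.prime_of_mem_primeFactorsList (hqm i)
  have : Fact (q i).Prime := ⟨hpi⟩
  have hd : ∀ j, q j ∣ n := fun j => Nat.dvd_of_mem_primeFactorsList (hqm j)
  have h := cast_sum' (hd i) I a (fun i => ((n / q i : ℕ) : ZMod n))
  rw [hs, ZMod.cast_zero, Finset.sum_eq_single_of_mem i hi] at h
  · have h1 : ((a i).cast : ZMod (q i)) ≠ 0 := by
      have h2 : IsUnit (a i) := ha i hi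
      simpa using (h2.map (ZMod.castHom (hd i) (ZMod (q i)))).ne_zero
    refine mul_ne_zero h1 ?_ h.symm
    rw [ZMod.cast_natCast (hd i), Ne, ZMod.natCast_eq_zero_iff]
    rintro ⟨c, hc⟩
    have h3 : n = q i * q i * c := by
      rw [mul_assoc, ← hc, Nat.mul_div_cancel' (hd i)]
    exact hpi.one_lt.ne' (Nat.isUnit_iff.1 (hsf (q i) ⟨c, h3⟩))
  · intro j _ hji
    have : (((n / q j : ℕ) : ZMod n).cast : ZMod (q i)) = 0 := by
      rw [ZMod.cast_natCast (hd i), ZMod.natCast_eq_zero_iff]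
      have h4 : q i ∣ q j * (n / q j) := by rw [Nat.mul_div_cancel' (hd j)]; exact hd i
      rcases hpi.dvd_mul.1 h4 with h5 | h5
      · exact absurd (hqinj ((Nat.prime_dvd_prime_iff_eq hpi
          (Nat.prime_of_mem_primeFactorsList (hqm j))).1 h5)).symm hji
      · exact h5
    rw [this, mul_zero]

lemma J_to_U {n l : ℕ} {S : Fin l → ZMod n} (h : HasWZSSub (JSet n) S) : HasWZSSub (USet n) S := by
  obtain ⟨I, hI, a, ha, hs⟩ := h
  exact ⟨I, hI, a, fun i hi => (ha i hi).1, hs⟩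

theorem extremal_S_iff_U (n : ℕ) (hodd : Odd n) (hsf : Squarefree n)
    (hOmega : 3 ≤ (Nat.primeFactorsList n).length)
    (hp7 : ∀ p : ℕ, p.Prime → p ∣ n → 7 ≤ p)
    {l : ℕ} (S : Fin l → ZMod n) :
    IsExtremal n (JSet n) S ↔ IsExtremal n (USet n) S := by
  have hset : {k | 0 < k ∧ ∀ S : Fin k → ZMod n, HasWZSSub (JSet n) S}
      = {k | 0 < k ∧ ∀ S : Fin k → ZMod n, HasWZSSub (USet n) S} := by
    ext k
    simp only [Set.mem_ofPred_eq]
    constructor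
    · rintro ⟨h0, h⟩
      exact ⟨h0, fun S => J_to_U (h S)⟩
    · rintro ⟨h0, h⟩
      refine ⟨h0, fun S => U_to_J hsf hp7 ?_ S (h S)⟩
      by_contra hk
      obtain ⟨T, hT⟩ := exists_free hsf (l := k) (by omega)
      exact hT (h T)
  have hD : DavW n (JSet n) = DavW n (USet n) := by rw [DavW, DavW, hset]
  unfold IsExtremal
  rw [hD]
  refine and_congr_right fun hl => not_congr ⟨J_to_U, fun hU => ?_⟩
  refine U_to_J hsf hp7 ?_ S hU
  have hl0 : l ≠ 0 := by
    rintro rfl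
    obtain ⟨I, ⟨i, _⟩, _⟩ := hU
    exact i.elim0
  have hmem : DavW n (USet n) ∈ {k | 0 < k ∧ ∀ S : Fin k → ZMod n, HasWZSSub (USet n) S} :=
    Nat.sInf_mem (Nat.nonempty_of_pos_sInf (by change 0 < DavW n (USet n); omega))
  by_contra hlt
  obtain ⟨T, hT⟩ := exists_free hsf (l := DavW n (USet n)) (by omega)
  exact hT (hmem.2 T)
end

section
/- Let n ≥ 3 be odd and let p be a prime divisor of n. If p is the unique prime divisor of n whose exponent v_p(n) in n is odd, then L(n;p) = U(n); otherwise L(n;p) is a subgroup of index 2 in U(n). -/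
lemma exists_jacobi_neg_one_s10 (m q : ℕ) (hm : Odd m) (hq : q.Prime)
    (ho : Odd (m.factorization q)) : ∃ a : ℕ, a.Coprime m ∧ jacobiSym (a : ℤ) m = -1 := by
  have hm0 : m ≠ 0 := by rintro rfl; simp at hm
  have : Fact q.Prime := ⟨hq⟩
  obtain ⟨e, r, hr, he⟩ := Nat.exists_eq_pow_mul_and_not_dvd hm0 q hq.ne_one
  have hr0 : r ≠ 0 := by rintro rfl; simp at hr
  have hfe : m.factorization q = e := by
    rw [he, Nat.factorization_mul (pow_ne_zero _ hq.ne_zero) hr0]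
    simp [hq.factorization_self, Nat.factorization_eq_zero_of_not_dvd hr]
  rw [hfe] at ho
  have he0 : e ≠ 0 := by rintro rfl; simp at ho
  have hq2 : q ≠ 2 := by
    rintro rfl
    have : 2 ∣ m := he ▸ Dvd.dvd.mul_right (dvd_pow_self 2 he0) r
    exact (Nat.not_even_iff_odd.mpr hm) (even_iff_two_dvd.mpr this)
  obtain ⟨x, hx⟩ := FiniteField.exists_nonsquare (F := ZMod q) (by rwa [ZMod.ringChar_zmod_n])
  have hcop : q.Coprime r := (Nat.Prime.coprime_iff_not_dvd hq).mpr hr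
  obtain ⟨a, ha1, ha2⟩ := Nat.chineseRemainder hcop x.val 1
  have h1 : jacobiSym (a : ℤ) q = -1 := by
    rw [ZMod.nonsquare_iff_jacobiSym_eq_neg_one]
    have := (ZMod.natCast_eq_natCast_iff _ _ _).mpr ha1
    rw [ZMod.natCast_zmod_val] at this
    push_cast
    rwa [this]
  have h2 : jacobiSym (a : ℤ) r = 1 := by
    rw [← jacobiSym.one_left r]
    apply jacobiSym.mod_left'
    exact_mod_cast ha2
  have h3 : jacobiSym (a : ℤ) m = -1 := by
    rw [he, jacobiSym.mul_right' _ (pow_ne_zero _ hq.ne_zero) hr0, jacobiSym.pow_right, h1, h2,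
      ho.neg_one_pow, mul_one]
  refine ⟨a, ?_, h3⟩
  by_contra hc
  have : jacobiSym (a : ℤ) m = 0 := jacobiSym.eq_zero_iff.mpr ⟨hm0, by simpa using hc⟩
  omega

lemma eq_sq_mul_of_unique_odd (n p : ℕ) (hn : n ≠ 0) (ho : Odd (n.factorization p))
    (h : ∀ q : ℕ, q.Prime → q ∣ n → Odd (n.factorization q) → q = p) :
    ∃ b, b ≠ 0 ∧ n = b ^ 2 * p := by
  obtain ⟨a, b, hab, hsq⟩ := Nat.sq_mul_squarefree n
  have hb : b ≠ 0 := by rintro rfl; simp at hab; omega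
  have ha : a ≠ 0 := by rintro rfl; simp at hab; omega
  refine ⟨b, hb, ?_⟩
  have hf : ∀ q, n.factorization q = 2 * b.factorization q + a.factorization q := by
    intro q
    rw [← hab, Nat.factorization_mul (pow_ne_zero _ hb) ha]
    simp
  rw [← hab]
  congr 1
  have hpa : p ∣ a := by
    by_contra hc
    rw [hf, Nat.factorization_eq_zero_of_not_dvd hc] at ho
    obtain ⟨k, hk⟩ := ho
    omega
  obtain ⟨c, rfl⟩ := hpa
  by_cases hc : c = 1
  · simp [hc]
  obtain ⟨q, hq, hqc⟩ := Nat.exists_prime_and_dvd hc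
  have hqa : q ∣ p * c := hqc.mul_left p
  have h1 := hsq.natFactorization_le_one q
  have h2 := hq.factorization_pos_of_dvd ha hqa
  have := h q hq (hab ▸ hqa.mul_left _) (by rw [hf]; exact ⟨b.factorization q, by omega⟩)
  subst this
  have := hsq q (mul_dvd_mul_left q hqc)
  exact absurd (Nat.isUnit_iff.mp this) hq.ne_one

theorem lgroup_top_or_index_two (n p : ℕ) (hn : 3 ≤ n) (hodd : Odd n)
    (hp : p.Prime) (hpn : p ∣ n) :
    ((Odd (n.factorization p) ∧
        ∀ q : ℕ, q.Prime → q ∣ n → Odd (n.factorization q) → q = p) →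
      LGroup n p hpn = ⊤) ∧
    (¬ (Odd (n.factorization p) ∧
        ∀ q : ℕ, q.Prime → q ∣ n → Odd (n.factorization q) → q = p) →
      (LGroup n p hpn).index = 2) := by
  have hn0 : n ≠ 0 := by omega
  have hcn : ∀ a : (ZMod n)ˣ, Int.gcd (((a : ZMod n).val : ℕ) : ℤ) n = 1 := by
    intro a
    simpa using ZMod.val_coe_unit_coprime a
  have hcp : ∀ a : (ZMod n)ˣ, Int.gcd (((a : ZMod n).val : ℕ) : ℤ) p = 1 := by
    intro a
    simpa using (ZMod.val_coe_unit_coprime a).coprime_dvd_right hpn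
  have hmem : ∀ a : (ZMod n)ˣ, a ∈ LGroup n p hpn ↔
      jacobiSym (((a : ZMod n).val : ℕ) : ℤ) n = jacobiSym (((a : ZMod n).val : ℕ) : ℤ) p :=
    fun a => Iff.rfl
  constructor
  · rintro ⟨h1, h2⟩
    obtain ⟨b, hb, hnb⟩ := eq_sq_mul_of_unique_odd n p hn0 h1 h2
    rw [eq_top_iff]
    intro a _
    rw [hmem]
    have hb1 : Int.gcd (((a : ZMod n).val : ℕ) : ℤ) b = 1 := by
      have : b ∣ n := hnb ▸ (dvd_pow_self b two_ne_zero).mul_right p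
      simpa using (ZMod.val_coe_unit_coprime a).coprime_dvd_right this
    generalize (((a : ZMod n).val : ℕ) : ℤ) = z at *
    rw [hnb, jacobiSym.mul_right' _ (pow_ne_zero _ hb) hp.ne_zero, jacobiSym.pow_right,
      jacobiSym.sq_one hb1, one_mul]
  · intro h
    have hpo : Odd p := hodd.of_dvd_nat hpn
    have hfac : ∀ q, (n * p).factorization q = n.factorization q + p.factorization q := by
      intro q
      rw [Nat.factorization_mul hn0 hp.ne_zero]
      rfl
    obtain ⟨q, hq, hqo⟩ : ∃ q : ℕ, q.Prime ∧ Odd ((n * p).factorization q) := by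
      by_cases h1 : Odd (n.factorization p)
      · push Not at h
        obtain ⟨q, hq, hqn, hqo, hqp⟩ := h h1
        refine ⟨q, hq, ?_⟩
        rw [hfac, Nat.factorization_eq_zero_of_not_dvd
          (fun hd => hqp ((Nat.prime_dvd_prime_iff_eq hq hp).mp hd))]
        simpa using hqo
      · refine ⟨p, hp, ?_⟩
        rw [hfac, hp.factorization_self]
        exact (Nat.not_odd_iff_even.mp h1).add_one
    obtain ⟨a, hac, haj⟩ := exists_jacobi_neg_one_s10 (n * p) q (hodd.mul hpo) hq hqo
    rw [jacobiSym.mul_right' _ hn0 hp.ne_zero] at haj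
    let u : (ZMod n)ˣ := ZMod.unitOfCoprime a (hac.coprime_dvd_right (dvd_mul_right n p))
    have hu : (((u : ZMod n).val : ℕ) : ℤ) = (a : ℤ) % n := by
      simp [u, ZMod.val_natCast]
    have hun : jacobiSym (((u : ZMod n).val : ℕ) : ℤ) n = jacobiSym a n := by
      rw [hu, ← jacobiSym.mod_left]
    have hup : jacobiSym (((u : ZMod n).val : ℕ) : ℤ) p = jacobiSym a p := by
      rw [hu]
      apply jacobiSym.mod_left'
      rw [Int.emod_emod_of_dvd _ (Int.natCast_dvd_natCast.mpr hpn)]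
    rw [Subgroup.index_eq_two_iff]
    refine ⟨u, fun b => ?_⟩
    rw [hmem, hmem, Units.val_mul, jacobi_val_mul n dvd_rfl, jacobi_val_mul p hpn]
    rw [← hun, ← hup] at haj
    rcases jacobiSym.eq_one_or_neg_one (hcn u) with h1 | h1 <;>
    rcases jacobiSym.eq_one_or_neg_one (hcp u) with h2 | h2 <;>
    rcases jacobiSym.eq_one_or_neg_one (hcn b) with h3 | h3 <;>
    rcases jacobiSym.eq_one_or_neg_one (hcp b) with h4 | h4 <;>
    rw [h1, h2] at haj ⊢ <;> rw [h3, h4] <;> simp [Xor] at haj ⊢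
end
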